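/- arXiv:2511.18959 — 7 statements merged into one kernel-verified Lean document; each statement's English description precedes it below -/
import Mathlib

section
/- Let V be an abelian group equipped with a Cl(r)-representation (p_i, q_i), and let W := ⋂_{i ∈ [r]} ker(p_i). Then the ℤ-linear map W ⊗_ℤ F(r) → V determined by w ⊗ v_I ↦ q_I(w) is bijective, and it intertwines the Cl(r)-actions, where Cl(r) acts on W ⊗_ℤ F(r) through the second tensor factor. -/
/-!
Statement 0: Let `V` be an abelian group equipped with a `Cl(r)`-representation `(pᵢ, qᵢ)`,
and `W := ⋂ᵢ ker pᵢ`.  The ℤ-linear map `W ⊗_ℤ F(r) → V` determined by `w ⊗ v_I ↦ q_I w`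
is bijective and intertwines the `Cl(r)`-actions, where `Cl(r)` acts on `W ⊗ F(r)` through
the second tensor factor.  Here `F(r)` is the free ℤ-module on the subsets of `[r] = Fin r`.
-/

/-- The ordered product `q_I = q_{a_0} ∘ q_{a_1} ∘ ⋯ ∘ q_{a_k}` for `I = {a_0 < ⋯ < a_k}`. -/
def qProd {r : ℕ} {V : Type*} [AddCommGroup V] (q : Fin r → AddMonoid.End V)
    (I : Finset (Fin r)) : AddMonoid.End V :=
  ((I.sort (· ≤ ·)).map q).prod

/-- The ordered product `p_I = p_{a_k} ∘ p_{a_{k-1}} ∘ ⋯ ∘ p_{a_0}` for `I = {a_0 < ⋯ < a_k}`. -/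
def pProd {r : ℕ} {V : Type*} [AddCommGroup V] (p : Fin r → AddMonoid.End V)
    (I : Finset (Fin r)) : AddMonoid.End V :=
  ((I.sort (· ≤ ·)).reverse.map p).prod

/-- A `Cl(r)`-representation on an abelian group `V`. -/
def IsCliffordRep {r : ℕ} {V : Type*} [AddCommGroup V] (p q : Fin r → AddMonoid.End V) : Prop :=
  (∀ i, p i * p i = 0) ∧ (∀ i, q i * q i = 0) ∧
    (∀ i j, p i * p j + p j * p i = 0) ∧
    (∀ i j, q i * q j + q j * q i = 0) ∧
    (∀ i j, p i * q j + q j * p i = if i = j then 1 else 0)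

/-- `#{j ∈ I : j < i}`. -/
def signCount {r : ℕ} (I : Finset (Fin r)) (i : Fin r) : ℕ :=
  (I.filter (fun j => j < i)).card

/-- The action of `p_i` on the spin representation `F(r) = ⨁_{I ⊆ [r]} ℤ·v_I`. -/
noncomputable def pF {r : ℕ} (i : Fin r) :
    (Finset (Fin r) →₀ ℤ) →ₗ[ℤ] (Finset (Fin r) →₀ ℤ) :=
  Finsupp.lift (Finset (Fin r) →₀ ℤ) ℤ (Finset (Fin r))
    (fun I => if i ∈ I then ((-1 : ℤ) ^ signCount I i) • Finsupp.single (I.erase i) 1 else 0)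

/-- The action of `q_i` on the spin representation `F(r)`. -/
noncomputable def qF {r : ℕ} (i : Fin r) :
    (Finset (Fin r) →₀ ℤ) →ₗ[ℤ] (Finset (Fin r) →₀ ℤ) :=
  Finsupp.lift (Finset (Fin r) →₀ ℤ) ℤ (Finset (Fin r))
    (fun I => if i ∈ I then 0 else ((-1 : ℤ) ^ signCount I i) • Finsupp.single (insert i I) 1)

/-!
The vacuum subgroup `W` is where all annihilation operators `p i` vanish. Sorting the factors of
`q_I` with the anticommutation relations computes `p i (q_I w)` and `q i (q_I w)` for `w ∈ W`, and
these are the formulas defining the action on `F(r)`.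

Surjectivity: the image is stable under the `q i` and contains `W`. Since
`v = p i (q i v) + q i (p i v)`, where both `p i (q i v)` and `p i v` are killed by `p i`, an
induction on the set of those `i` for which `p i v` may be nonzero puts every `v` into the image.

Injectivity: for `w ∈ W` one has `p_J (q_J w) = w`, while `p_J (q_K w) = 0` unless `J ⊆ K`. Hence
`p_J` reads off `w_J` from `∑ K, q_K w_K` once the coefficients at all `K ⊋ J` are known to vanish.
-/

open scoped TensorProduct

theorem sort_insert_of_forall_lt {α : Type*} [LinearOrder α] {a : α} {I : Finset α}
    (ha : ∀ x ∈ I, a < x) :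
    (insert a I).sort (· ≤ ·) = a :: I.sort (· ≤ ·) :=
  Finset.sort_insert _ (fun x hx => (ha x hx).le) fun haI => (ha a haI).false

section OrderedProducts

variable {r : ℕ} {V : Type*} [AddCommGroup V] {a : Fin r} {I : Finset (Fin r)}

theorem qProd_empty (q : Fin r → AddMonoid.End V) (v : V) : qProd q ∅ v = v := by
  simp [qProd]

theorem pProd_empty (p : Fin r → AddMonoid.End V) (v : V) : pProd p ∅ v = v := by
  simp [pProd]

theorem qProd_insert_of_forall_lt (q : Fin r → AddMonoid.End V) (ha : ∀ x ∈ I, a < x) (v : V) :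
    qProd q (insert a I) v = q a (qProd q I v) := by
  simp only [qProd, sort_insert_of_forall_lt ha, List.map_cons, List.prod_cons]
  rfl

theorem pProd_insert_of_forall_lt (p : Fin r → AddMonoid.End V) (ha : ∀ x ∈ I, a < x) (v : V) :
    pProd p (insert a I) v = pProd p I (p a v) := by
  simp only [pProd, sort_insert_of_forall_lt ha, List.reverse_cons, List.map_append,
    List.prod_append, List.map_singleton, List.prod_singleton]
  rfl

end OrderedProducts

section SignCount

variable {r : ℕ} {a i : Fin r} {I : Finset (Fin r)}

theorem signCount_eq_zero (hi : ∀ x ∈ I, i ≤ x) : signCount I i = 0 := by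
  simpa [signCount, Finset.filter_eq_empty_iff] using hi

theorem signCount_insert_of_lt (ha : a ∉ I) (hai : a < i) :
    signCount (insert a I) i = signCount I i + 1 := by
  simp [signCount, Finset.filter_insert, hai, ha]

theorem signCount_erase_self : signCount (I.erase i) i = signCount I i := by
  simp [signCount, Finset.filter_erase]

end SignCount

/-- The vacuum subgroup `⋂ i, ker (p i)` of a family of annihilation operators. -/
def vacuum {r : ℕ} {V : Type*} [AddCommGroup V] (p : Fin r → AddMonoid.End V) : AddSubgroup V :=
  ⨅ i, AddMonoidHom.ker (p i)

theorem mem_vacuum {r : ℕ} {V : Type*} [AddCommGroup V] {p : Fin r → AddMonoid.End V} {v : V} :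
    v ∈ vacuum p ↔ ∀ i, p i v = 0 := by
  simp only [vacuum, AddSubgroup.mem_iInf]
  rfl

namespace IsCliffordRep

variable {r : ℕ} {V : Type*} [AddCommGroup V] {p q : Fin r → AddMonoid.End V}
  {i j : Fin r} {I J : Finset (Fin r)} {v : V}

theorem p_p_self (h : IsCliffordRep p q) (i : Fin r) (v : V) : p i (p i v) = 0 :=
  DFunLike.congr_fun (h.1 i) v

theorem q_q_self (h : IsCliffordRep p q) (i : Fin r) (v : V) : q i (q i v) = 0 :=
  DFunLike.congr_fun (h.2.1 i) v

theorem p_p_anticomm (h : IsCliffordRep p q) (i j : Fin r) (v : V) :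
    p i (p j v) = -p j (p i v) :=
  eq_neg_of_add_eq_zero_left (DFunLike.congr_fun (h.2.2.1 i j) v)

theorem q_q_anticomm (h : IsCliffordRep p q) (i j : Fin r) (v : V) :
    q i (q j v) = -q j (q i v) :=
  eq_neg_of_add_eq_zero_left (DFunLike.congr_fun (h.2.2.2.1 i j) v)

theorem p_q_add_q_p_self (h : IsCliffordRep p q) (i : Fin r) (v : V) :
    p i (q i v) + q i (p i v) = v :=
  (DFunLike.congr_fun (h.2.2.2.2 i i) v).trans (by simp)

theorem p_q_anticomm (h : IsCliffordRep p q) (hij : i ≠ j) (v : V) :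
    p i (q j v) = -q j (p i v) :=
  eq_neg_of_add_eq_zero_left <| (DFunLike.congr_fun (h.2.2.2.2 i j) v).trans (by simp [hij])

theorem q_qProd_of_notMem (h : IsCliffordRep p q) (hi : i ∉ I) (v : V) :
    q i (qProd q I v) = (-1 : ℤ) ^ signCount I i • qProd q (insert i I) v := by
  induction I using Finset.induction_on_min with
  | empty =>
    rw [qProd_insert_of_forall_lt q (by simp)]
    simp [signCount]
  | insert a s has ih =>
    obtain ⟨hia, his⟩ : i ≠ a ∧ i ∉ s := by simpa using hi
    rcases hia.lt_or_gt with hlt | hgt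
    · have i_lt : ∀ x ∈ insert a s, i < x := by
        simpa [hlt] using fun x hx => hlt.trans (has x hx)
      simp [qProd_insert_of_forall_lt q i_lt, signCount_eq_zero fun x hx => (i_lt x hx).le]
    · have a_lt : ∀ x ∈ insert i s, a < x := by simpa [hgt] using has
      have ha : a ∉ s := fun ha => (has a ha).false
      calc q i (qProd q (insert a s) v)
          = -q a (q i (qProd q s v)) := by
            rw [qProd_insert_of_forall_lt q has, h.q_q_anticomm]
        _ = (-1 : ℤ) ^ (signCount s i + 1) • q a (qProd q (insert i s) v) := by
            rw [ih his, map_zsmul, pow_succ, mul_neg_one, neg_smul]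
        _ = (-1 : ℤ) ^ signCount (insert a s) i • qProd q (insert i (insert a s)) v := by
            rw [signCount_insert_of_lt ha hgt, Finset.insert_comm,
              qProd_insert_of_forall_lt q a_lt]

theorem qProd_eq_q_qProd_erase (h : IsCliffordRep p q) (hi : i ∈ I) (v : V) :
    qProd q I v = (-1 : ℤ) ^ signCount I i • q i (qProd q (I.erase i) v) := by
  rw [h.q_qProd_of_notMem (I.notMem_erase i), signCount_erase_self, Finset.insert_erase hi,
    smul_smul, ← mul_pow, neg_one_mul, neg_neg, one_pow, one_smul]

theorem q_qProd_of_mem (h : IsCliffordRep p q) (hi : i ∈ I) (v : V) :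
    q i (qProd q I v) = 0 := by
  rw [h.qProd_eq_q_qProd_erase hi, map_zsmul, h.q_q_self, smul_zero]

theorem p_qProd_of_notMem (h : IsCliffordRep p q) (hi : i ∉ I) (hv : p i v = 0) :
    p i (qProd q I v) = 0 := by
  induction I using Finset.induction_on_min with
  | empty => simpa [qProd_empty] using hv
  | insert a s has ih =>
    obtain ⟨hia, his⟩ : i ≠ a ∧ i ∉ s := by simpa using hi
    rw [qProd_insert_of_forall_lt q has, h.p_q_anticomm hia, ih his,
      map_zero, neg_zero]

theorem p_q_qProd_of_notMem (h : IsCliffordRep p q) (hi : i ∉ I) (hv : p i v = 0) :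
    p i (q i (qProd q I v)) = qProd q I v := by
  simpa [h.p_qProd_of_notMem hi hv] using h.p_q_add_q_p_self i (qProd q I v)

theorem p_qProd_of_mem (h : IsCliffordRep p q) (hi : i ∈ I) (hv : p i v = 0) :
    p i (qProd q I v) = (-1 : ℤ) ^ signCount I i • qProd q (I.erase i) v := by
  rw [h.qProd_eq_q_qProd_erase hi, map_zsmul, h.p_q_qProd_of_notMem (I.notMem_erase i) hv]

theorem pProd_qProd_self (h : IsCliffordRep p q) (hv : v ∈ vacuum p) (I : Finset (Fin r)) :
    pProd p I (qProd q I v) = v := by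
  induction I using Finset.induction_on_min with
  | empty => simp [pProd_empty, qProd_empty]
  | insert a s has ih =>
    have ha : a ∉ s := fun ha => (has a ha).false
    rw [pProd_insert_of_forall_lt p has, qProd_insert_of_forall_lt q has,
      h.p_q_qProd_of_notMem ha (mem_vacuum.1 hv a), ih]

theorem pProd_qProd_of_not_subset (h : IsCliffordRep p q) (hv : v ∈ vacuum p) (hJI : ¬J ⊆ I) :
    pProd p J (qProd q I v) = 0 := by
  induction J using Finset.induction_on_min generalizing I with
  | empty => simp at hJI
  | insert a s has ih =>
    rw [pProd_insert_of_forall_lt p has]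
    by_cases ha : a ∈ I
    · have hsI : ¬s ⊆ I.erase a := fun hs =>
        hJI (Finset.insert_subset ha (hs.trans (I.erase_subset a)))
      rw [h.p_qProd_of_mem ha (mem_vacuum.1 hv a), map_zsmul, ih hsI, smul_zero]
    · rw [h.p_qProd_of_notMem ha (mem_vacuum.1 hv a), map_zero]

theorem eq_zero_of_sum_qProd_eq_zero (h : IsCliffordRep p q) {w : Finset (Fin r) → V}
    (hw : ∀ I, w I ∈ vacuum p) (hsum : ∑ I, qProd q I (w I) = 0) (J : Finset (Fin r)) :
    w J = 0 := by
  induction J using WellFoundedGT.induction with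
  | ind J ih =>
    have pProd_term_eq_zero : ∀ K ≠ J, pProd p J (qProd q K (w K)) = 0 := by
      intro K hKJ
      by_cases hJK : J ⊆ K
      · rw [ih K (hJK.ssubset_of_ne hKJ.symm), map_zero, map_zero]
      · exact h.pProd_qProd_of_not_subset (hw K) hJK
    calc w J
        = pProd p J (qProd q J (w J)) := (h.pProd_qProd_self (hw J) J).symm
      _ = ∑ K, pProd p J (qProd q K (w K)) :=
          (Fintype.sum_eq_single J pProd_term_eq_zero).symm
      _ = 0 := by rw [← map_sum, hsum, map_zero]

theorem mem_of_forall_notMem_p_eq_zero (h : IsCliffordRep p q) {R : AddSubgroup V}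
    (hqR : ∀ i, ∀ v ∈ R, q i v ∈ R) (hvac : vacuum p ≤ R) (S : Finset (Fin r))
    (hv : ∀ i ∉ S, p i v = 0) : v ∈ R := by
  induction S using Finset.induction_on generalizing v with
  | empty => exact hvac (mem_vacuum.2 fun i => hv i (Finset.notMem_empty i))
  | insert a s _ ih =>
    have hpav : ∀ i ∉ s, p i (p a v) = 0 := by
      intro i his
      rcases eq_or_ne i a with rfl | hia
      · exact h.p_p_self i v
      · rw [h.p_p_anticomm, hv i (by simp [hia, his]), map_zero, neg_zero]
    have hpaqav : ∀ i ∉ s, p i (p a (q a v)) = 0 := by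
      intro i his
      rcases eq_or_ne i a with rfl | hia
      · exact h.p_p_self i _
      · rw [h.p_p_anticomm, h.p_q_anticomm hia, hv i (by simp [hia, his]), map_zero, neg_zero,
          map_zero, neg_zero]
    rw [← h.p_q_add_q_p_self a v]
    exact R.add_mem (ih hpaqav) (hqR a _ (ih hpav))

theorem eq_top_of_vacuum_le (h : IsCliffordRep p q) {R : AddSubgroup V}
    (hqR : ∀ i, ∀ v ∈ R, q i v ∈ R) (hvac : vacuum p ≤ R) : R = ⊤ :=
  (AddSubgroup.eq_top_iff' R).2 fun _ =>
    h.mem_of_forall_notMem_p_eq_zero hqR hvac Finset.univ fun i hi => (hi (Finset.mem_univ i)).elim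

end IsCliffordRep

section SpinRepresentation

variable {r : ℕ} {i : Fin r} {I : Finset (Fin r)}

theorem pF_single_of_mem (hi : i ∈ I) :
    pF i (Finsupp.single I 1) = (-1 : ℤ) ^ signCount I i • Finsupp.single (I.erase i) 1 := by
  simp [pF, hi, -Finsupp.smul_single]

theorem pF_single_of_notMem (hi : i ∉ I) : pF i (Finsupp.single I 1) = 0 := by
  simp [pF, hi]

theorem qF_single_of_mem (hi : i ∈ I) : qF i (Finsupp.single I 1) = 0 := by
  simp [qF, hi]

theorem qF_single_of_notMem (hi : i ∉ I) :
    qF i (Finsupp.single I 1) = (-1 : ℤ) ^ signCount I i • Finsupp.single (insert i I) 1 := by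
  simp [qF, hi, -Finsupp.smul_single]

end SpinRepresentation

section TensorFinsupp

variable {M N ι : Type*} [AddCommGroup M] [AddCommGroup N]

theorem exists_eq_sum_tmul_single [Fintype ι] (x : M ⊗[ℤ] (ι →₀ ℤ)) :
    ∃ m : ι → M, x = ∑ k, m k ⊗ₜ Finsupp.single k 1 := by
  induction x using TensorProduct.induction_on with
  | zero => exact ⟨0, by simp⟩
  | tmul m f =>
    refine ⟨fun k => f k • m, ?_⟩
    have hf : f = ∑ k, f k • Finsupp.single k 1 := by ext; simp
    simp_rw [TensorProduct.smul_tmul]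
    rw [← TensorProduct.tmul_sum, ← hf]
  | add x y hx hy =>
    obtain ⟨m, rfl⟩ := hx
    obtain ⟨n, rfl⟩ := hy
    exact ⟨m + n, by simp [TensorProduct.add_tmul, Finset.sum_add_distrib]⟩

theorem map_lTensor_eq_of_tmul_single {φ : M ⊗[ℤ] (ι →₀ ℤ) →ₗ[ℤ] N}
    {T : (ι →₀ ℤ) →ₗ[ℤ] (ι →₀ ℤ)} {f : AddMonoid.End N}
    (hT : ∀ m k, φ (m ⊗ₜ T (Finsupp.single k 1)) = f (φ (m ⊗ₜ Finsupp.single k 1)))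
    (x : M ⊗[ℤ] (ι →₀ ℤ)) : φ (T.lTensor M x) = f (φ x) := by
  induction x using TensorProduct.induction_on with
  | zero => simp only [map_zero]
  | add x y hx hy => simp only [map_add, hx, hy]
  | tmul m g =>
    rw [LinearMap.lTensor_tmul]
    induction g using Finsupp.induction_linear with
    | zero => simp only [map_zero, TensorProduct.tmul_zero]
    | add g g' hg hg' => simp only [map_add, TensorProduct.tmul_add, hg, hg']
    | single k n =>
      have single_eq_zsmul : Finsupp.single k n = n • Finsupp.single k (1 : ℤ) := by simp
      simp only [single_eq_zsmul, map_zsmul, TensorProduct.tmul_smul, hT]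

end TensorFinsupp

namespace IsCliffordRep

variable {r : ℕ} {V : Type*} [AddCommGroup V] {p q : Fin r → AddMonoid.End V}
  {φ : vacuum p ⊗[ℤ] (Finset (Fin r) →₀ ℤ) →ₗ[ℤ] V}

theorem map_lTensor_pF (h : IsCliffordRep p q)
    (hφ : ∀ w I, φ (w ⊗ₜ Finsupp.single I 1) = qProd q I w) (i : Fin r)
    (x : vacuum p ⊗[ℤ] (Finset (Fin r) →₀ ℤ)) :
    φ ((pF i).lTensor (vacuum p) x) = p i (φ x) := by
  refine map_lTensor_eq_of_tmul_single (fun w I => ?_) x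
  have hw : p i w = 0 := mem_vacuum.1 w.2 i
  by_cases hi : i ∈ I
  · rw [pF_single_of_mem hi, TensorProduct.tmul_smul, map_zsmul, hφ, hφ, h.p_qProd_of_mem hi hw]
  · rw [pF_single_of_notMem hi, TensorProduct.tmul_zero, map_zero, hφ, h.p_qProd_of_notMem hi hw]

theorem map_lTensor_qF (h : IsCliffordRep p q)
    (hφ : ∀ w I, φ (w ⊗ₜ Finsupp.single I 1) = qProd q I w) (i : Fin r)
    (x : vacuum p ⊗[ℤ] (Finset (Fin r) →₀ ℤ)) :
    φ ((qF i).lTensor (vacuum p) x) = q i (φ x) := by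
  refine map_lTensor_eq_of_tmul_single (fun w I => ?_) x
  by_cases hi : i ∈ I
  · rw [qF_single_of_mem hi, TensorProduct.tmul_zero, map_zero, hφ, h.q_qProd_of_mem hi]
  · rw [qF_single_of_notMem hi, TensorProduct.tmul_smul, map_zsmul, hφ, hφ,
      h.q_qProd_of_notMem hi]

theorem injective_of_tmul_single (h : IsCliffordRep p q)
    (hφ : ∀ w I, φ (w ⊗ₜ Finsupp.single I 1) = qProd q I w) : Function.Injective φ := by
  refine (injective_iff_map_eq_zero _).2 fun x hx => ?_
  obtain ⟨w, rfl⟩ := exists_eq_sum_tmul_single x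
  simp only [map_sum, hφ] at hx
  have hw : ∀ I, w I = 0 := fun I =>
    Subtype.ext (h.eq_zero_of_sum_qProd_eq_zero (fun K => (w K).2) hx I)
  simp only [hw, TensorProduct.zero_tmul, Finset.sum_const_zero]

theorem surjective_of_tmul_single (h : IsCliffordRep p q)
    (hφ : ∀ w I, φ (w ⊗ₜ Finsupp.single I 1) = qProd q I w) : Function.Surjective φ := by
  have q_mem_range : ∀ i, ∀ v ∈ φ.toAddMonoidHom.range, q i v ∈ φ.toAddMonoidHom.range := by
    rintro i _ ⟨x, rfl⟩
    exact ⟨(qF i).lTensor _ x, h.map_lTensor_qF hφ i x⟩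
  have vacuum_le_range : vacuum p ≤ φ.toAddMonoidHom.range := fun w hw =>
    ⟨(⟨w, hw⟩ : vacuum p) ⊗ₜ Finsupp.single ∅ 1, (hφ _ _).trans (qProd_empty q w)⟩
  exact AddMonoidHom.range_eq_top.1 (h.eq_top_of_vacuum_le q_mem_range vacuum_le_range)

end IsCliffordRep

theorem stmt_0 {r : ℕ} (hr : 0 < r) {V : Type} [AddCommGroup V]
    (p q : Fin r → AddMonoid.End V) (hpq : IsCliffordRep p q)
    (W : AddSubgroup V) (hW : ∀ v : V, v ∈ W ↔ ∀ i : Fin r, p i v = 0)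
    (φ : TensorProduct ℤ W (Finset (Fin r) →₀ ℤ) →ₗ[ℤ] V)
    (hφ : ∀ (w : W) (I : Finset (Fin r)),
      φ (w ⊗ₜ[ℤ] Finsupp.single I 1) = qProd q I (w : V)) :
    Function.Bijective φ ∧
      (∀ (i : Fin r) (x : TensorProduct ℤ W (Finset (Fin r) →₀ ℤ)),
        φ (LinearMap.lTensor W (pF i) x) = p i (φ x)) ∧
      (∀ (i : Fin r) (x : TensorProduct ℤ W (Finset (Fin r) →₀ ℤ)),
        φ (LinearMap.lTensor W (qF i) x) = q i (φ x)) := by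
  obtain rfl : W = vacuum p := AddSubgroup.ext fun v => (hW v).trans mem_vacuum.symm
  exact ⟨⟨hpq.injective_of_tmul_single hφ, hpq.surjective_of_tmul_single hφ⟩,
    hpq.map_lTensor_pF hφ, hpq.map_lTensor_qF hφ⟩
end

section
/- Let V be an abelian group equipped with a Cl(r)-representation (p_i, q_i). Then: (a) for every w ∈ V with p_i(w) = 0 for all i ∈ [r], one has p_{[r]}(q_{[r]}(w)) = w; and (b) for every w ∈ V with q_i(w) = 0 for all i ∈ [r], one has q_{[r]}(p_{[r]}(w)) = w. -/
/-!
Statement 1: (a) for every `w ∈ V` with `pᵢ w = 0` for all `i`, one has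
`p_{[r]} (q_{[r]} w) = w`; (b) dually with `p` and `q` exchanged.
-/

/-- The mixed canonical anticommutation relations `a i * b j + b j * a i = δ i j` between two
families of elements of a semiring: the relations of a `Cl(r)`-representation that link the `p i`
with the `q j`. -/
def IsCanonicalPair {ι R : Type*} [DecidableEq ι] [Semiring R] (a b : ι → R) : Prop :=
  ∀ i j, a i * b j + b j * a i = if i = j then 1 else 0

namespace IsCanonicalPair

variable {ι R M : Type*} [DecidableEq ι] [Semiring R] [AddCommMonoid M] [Module R M]
  {a b : ι → R}

theorem symm (h : IsCanonicalPair a b) : IsCanonicalPair b a := fun i j => by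
  simpa only [add_comm, eq_comm] using h j i

theorem smul_smul_of_smul_eq_zero (h : IsCanonicalPair a b) {i : ι} {m : M}
    (hm : a i • m = 0) (j : ι) : a i • b j • m = if i = j then m else 0 :=
  calc a i • b j • m = (a i * b j + b j * a i) • m := by
        rw [add_smul, mul_smul, mul_smul, hm, smul_zero, add_zero]
    _ = if i = j then m else 0 := by rw [h i j, ite_smul, one_smul, zero_smul]

theorem smul_prod_map_smul_eq_zero (h : IsCanonicalPair a b) {i : ι} {m : M}
    (hm : a i • m = 0) {l : List ι} (hi : i ∉ l) : a i • (l.map b).prod • m = 0 := by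
  induction l with
  | nil => simpa using hm
  | cons j l ih =>
    obtain ⟨hij, hil⟩ := not_or.mp (mt List.mem_cons.mpr hi)
    rw [List.map_cons, List.prod_cons, mul_smul, h.smul_smul_of_smul_eq_zero (ih hil),
      if_neg hij]

theorem prod_map_reverse_smul_prod_map_smul (h : IsCanonicalPair a b) {m : M} {l : List ι}
    (hl : l.Nodup) (hm : ∀ i ∈ l, a i • m = 0) :
    (l.reverse.map a).prod • (l.map b).prod • m = m := by
  induction l with
  | nil => simp
  | cons j l ih =>
    obtain ⟨hj, hl⟩ := List.nodup_cons.mp hl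
    obtain ⟨hmj, hm⟩ := List.forall_mem_cons.mp hm
    -- The adjacent `a j` and `b j` cancel since `a j` annihilates everything to their right.
    have cancel : a j • b j • (l.map b).prod • m = (l.map b).prod • m := by
      rw [h.smul_smul_of_smul_eq_zero (h.smul_prod_map_smul_eq_zero hmj hj), if_pos rfl]
    calc ((j :: l).reverse.map a).prod • ((j :: l).map b).prod • m
        = (l.reverse.map a).prod • a j • b j • (l.map b).prod • m := by
          simp [mul_smul]
      _ = m := by rw [cancel, ih hl hm]

end IsCanonicalPair

theorem stmt_1_general {r : ℕ} {V : Type*} [AddCommGroup V] {p q : Fin r → AddMonoid.End V}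
    (hpq : IsCanonicalPair p q) (I : Finset (Fin r)) :
    (∀ w : V, (∀ i ∈ I, p i w = 0) → pProd p I (qProd q I w) = w) ∧
    (∀ w : V, (∀ i ∈ I, q i w = 0) → qProd q I (pProd p I w) = w) := by
  have hI : (I.sort (· ≤ ·)).Nodup := I.sort_nodup _
  refine ⟨fun w hw => ?_, fun w hw => ?_⟩
  · exact hpq.prod_map_reverse_smul_prod_map_smul hI
      (by simpa only [Finset.mem_sort, AddMonoid.End.smul_def] using hw)
  · have cancel := hpq.symm.prod_map_reverse_smul_prod_map_smul (m := w)
      (List.nodup_reverse.mpr hI)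
      (by simpa only [List.mem_reverse, Finset.mem_sort, AddMonoid.End.smul_def] using hw)
    rwa [List.reverse_reverse] at cancel

theorem stmt_1 {r : ℕ} (hr : 0 < r) {V : Type} [AddCommGroup V]
    (p q : Fin r → AddMonoid.End V) (hpq : IsCliffordRep p q) :
    (∀ w : V, (∀ i : Fin r, p i w = 0) →
      pProd p Finset.univ (qProd q Finset.univ w) = w) ∧
    (∀ w : V, (∀ i : Fin r, q i w = 0) →
      qProd q Finset.univ (pProd p Finset.univ w) = w) := by
  obtain ⟨-, -, -, -, hmixed⟩ := hpq
  simpa using stmt_1_general hmixed Finset.univ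
end

section
/- Let V be an abelian group equipped with a Cl(r)-representation (p_i, q_i). Then Σ_{I ⊆ [r]} q_I ∘ p_{[r]} ∘ q_{[r]} ∘ p_I = id_V, where the sum runs over all 2^r subsets I of [r]. -/
/-!
Statement 2: `Σ_{I ⊆ [r]} q_I ∘ p_{[r]} ∘ q_{[r]} ∘ p_I = id_V`.
-/

/-!
Think of `q i` as creating and of `p i` as annihilating a fermion in mode `i`. Then
`q_I p_s q_s p_I` is the projector onto the states of the modes `s` in which exactly those in `I`
are occupied: up to reordering, it is the product of the factors `q i * p i` for `i ∈ I` and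
`p i * q i` for `i ∈ s \ I`. These bilinear factors commute with everything in the other modes, so
summing over `I` expands the product of `p i * q i + q i * p i = 1` over `i ∈ s`. The factors are
split off one at a time, starting with the smallest index.
-/

section Anticommute

variable {R : Type*} [Ring R] {x y z : R}

/-- Two elements of a ring anticommute. The condition is stated as a vanishing anticommutator,
so in characteristic two it agrees with `Commute`, and `Anticommute x x` says `2 * x ^ 2 = 0`. -/
def Anticommute (x y : R) : Prop :=
  x * y + y * x = 0

theorem Anticommute.symm (h : Anticommute x y) : Anticommute y x :=
  (add_comm _ _).trans h

theorem Anticommute.eq_neg (h : Anticommute x y) : x * y = -(y * x) :=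
  eq_neg_of_add_eq_zero_left h

theorem Anticommute.mul_left (hx : Anticommute x z) (hy : Anticommute y z) :
    Commute (x * y) z :=
  calc
    x * y * z = -(x * z * y) := by rw [mul_assoc, hy.eq_neg, mul_neg, mul_assoc]
    _ = z * (x * y) := by rw [hx.eq_neg, neg_mul, neg_neg, mul_assoc]

theorem mul_list_prod_of_anticommute {l : List R} (h : ∀ y ∈ l, Anticommute x y) :
    x * l.prod = (-1) ^ l.length * (l.prod * x) := by
  induction l with
  | nil => simp
  | cons y l ih =>
    obtain ⟨hy, hl⟩ := List.forall_mem_cons.1 h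
    calc
      x * (y :: l).prod = -(y * (x * l.prod)) := by
        rw [List.prod_cons, ← mul_assoc, hy.eq_neg, neg_mul, mul_assoc]
      _ = -((-1) ^ l.length * (y * (l.prod * x))) := by
        rw [ih hl, ((Commute.neg_one_right y).pow_right _).left_comm]
      _ = (-1) ^ (y :: l).length * ((y :: l).prod * x) := by
        simp [pow_succ, mul_assoc]

theorem commute_list_prod_of_anticommute {l : List R} (hl : Even l.length)
    (h : ∀ y ∈ l, Anticommute x y) : Commute x l.prod := by
  rw [commute_iff_eq, mul_list_prod_of_anticommute h, hl.neg_one_pow, one_mul]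

theorem mul_mul_eq_self_of_mul_add_mul_eq_one (hy : y * y = 0)
    (hxy : x * y + y * x = 1) : y * x * y = y := by
  rw [eq_sub_of_add_eq' hxy, sub_mul, one_mul, mul_assoc, hy, mul_zero, sub_zero]

end Anticommute

section SortedProd

variable {ι M : Type*} [LinearOrder ι] [Monoid M] {f : ι → M} {s : Finset ι} {a : ι} {x : M}

/-- The product of `f i` over `i ∈ s`, with indices increasing from left to right; this is
`qProd` over an arbitrary linear order and in an arbitrary monoid. -/
def incProd (f : ι → M) (s : Finset ι) : M :=
  ((s.sort (· ≤ ·)).map f).prod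

/-- The product of `f i` over `i ∈ s`, with indices decreasing from left to right; this is
`pProd` over an arbitrary linear order and in an arbitrary monoid. -/
def decProd (f : ι → M) (s : Finset ι) : M :=
  ((s.sort (· ≤ ·)).reverse.map f).prod

theorem sort_insert_of_forall_lt_s2 (ha : ∀ i ∈ s, a < i) :
    (insert a s).sort (· ≤ ·) = a :: s.sort (· ≤ ·) :=
  Finset.sort_insert _ (fun i hi => (ha i hi).le) fun h => (ha a h).false

theorem incProd_insert_of_forall_lt (ha : ∀ i ∈ s, a < i) :
    incProd f (insert a s) = f a * incProd f s := by
  simp [incProd, sort_insert_of_forall_lt_s2 ha]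

theorem decProd_insert_of_forall_lt (ha : ∀ i ∈ s, a < i) :
    decProd f (insert a s) = decProd f s * f a := by
  simp [decProd, sort_insert_of_forall_lt_s2 ha]

theorem commute_incProd (h : ∀ i ∈ s, Commute x (f i)) : Commute x (incProd f s) :=
  Commute.list_prod_right _ _ (by simpa using h)

theorem commute_decProd (h : ∀ i ∈ s, Commute x (f i)) : Commute x (decProd f s) :=
  Commute.list_prod_right _ _ (by simpa using h)

end SortedProd

section OccupationProj

variable {ι R : Type*} [LinearOrder ι] [Ring R] {p q : ι → R} {s I : Finset ι} {a : ι} {x : R}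

/-- The element `q_I p_s q_s p_I`. For fermions with annihilators `p` and creators `q` it is the
projector onto the states of the modes in `s` whose set of occupied modes is `I ⊆ s`. -/
def occupationProj (p q : ι → R) (s I : Finset ι) : R :=
  incProd q I * decProd p s * incProd q s * decProd p I

theorem commute_occupationProj (hI : I ⊆ s) (hp : ∀ i ∈ s, Anticommute x (p i))
    (hq : ∀ i ∈ s, Anticommute x (q i)) : Commute x (occupationProj p q s I) := by
  let word : List R := (I.sort (· ≤ ·)).map q ++ (s.sort (· ≤ ·)).reverse.map p ++
    (s.sort (· ≤ ·)).map q ++ (I.sort (· ≤ ·)).reverse.map p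
  have word_prod : word.prod = occupationProj p q s I := by
    simp only [word, List.prod_append, occupationProj, incProd, decProd]
  have even_length : Even word.length := ⟨I.card + s.card, by
    simp only [word, List.length_append, List.length_map, List.length_reverse, Finset.length_sort]
    ring⟩
  have anticommute_word : ∀ y ∈ word, Anticommute x y := by
    simp only [word, List.mem_append, List.mem_map, List.mem_reverse, Finset.mem_sort]
    rintro _ (((⟨i, hi, rfl⟩ | ⟨i, hi, rfl⟩) | ⟨i, hi, rfl⟩) | ⟨i, hi, rfl⟩)
    exacts [hq i (hI hi), hp i hi, hq i hi, hp i (hI hi)]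
  exact word_prod ▸ commute_list_prod_of_anticommute even_length anticommute_word

theorem occupationProj_insert_left (ha : ∀ i ∈ s, a < i) (hI : I ⊆ s)
    (hp : ∀ i ∈ s, Commute (p a * q a) (p i)) (hq : ∀ i ∈ s, Commute (p a * q a) (q i)) :
    occupationProj p q (insert a s) I = p a * q a * occupationProj p q s I := by
  have comm : Commute (p a * q a) (incProd q I * decProd p s) :=
    (commute_incProd fun i hi => hq i (hI hi)).mul_right (commute_decProd hp)
  calc
    occupationProj p q (insert a s) I
        = incProd q I * decProd p s * (p a * q a) * incProd q s * decProd p I := by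
      simp only [occupationProj, incProd_insert_of_forall_lt ha, decProd_insert_of_forall_lt ha,
        mul_assoc]
    _ = p a * q a * occupationProj p q s I := by
      rw [← comm.eq]
      simp only [occupationProj, mul_assoc]

theorem occupationProj_insert_right (ha : ∀ i ∈ I, a < i) :
    occupationProj p q s (insert a I) = q a * occupationProj p q s I * p a := by
  simp only [occupationProj, incProd_insert_of_forall_lt ha, decProd_insert_of_forall_lt ha,
    mul_assoc]

theorem occupationProj_insert_insert (ha : ∀ i ∈ s, a < i) (hI : I ⊆ s)
    (hqpq : q a * p a * q a = q a)
    (hpp : ∀ i ∈ s, Anticommute (p a) (p i)) (hpq : ∀ i ∈ s, Anticommute (p a) (q i))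
    (hqp : ∀ i ∈ s, Anticommute (q a) (p i)) (hqq : ∀ i ∈ s, Anticommute (q a) (q i)) :
    occupationProj p q (insert a s) (insert a I) = q a * p a * occupationProj p q s I :=
  calc
    occupationProj p q (insert a s) (insert a I)
        = q a * (p a * q a * occupationProj p q s I) * p a := by
      rw [occupationProj_insert_right fun i hi => ha i (hI hi),
        occupationProj_insert_left ha hI (fun i hi => (hpp i hi).mul_left (hqp i hi))
          fun i hi => (hpq i hi).mul_left (hqq i hi)]
    _ = q a * p a * q a * (occupationProj p q s I * p a) := by simp only [mul_assoc]
    _ = q a * p a * occupationProj p q s I := by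
      rw [hqpq, ← (commute_occupationProj hI hpp hpq).eq, mul_assoc]

theorem stmt_2_general (hq : ∀ i, q i * q i = 0)
    (hpp : Pairwise fun i j => Anticommute (p i) (p j))
    (hqq : Pairwise fun i j => Anticommute (q i) (q j))
    (hpq : ∀ i j, p i * q j + q j * p i = if i = j then 1 else 0) (s : Finset ι) :
    ∑ I ∈ s.powerset, occupationProj p q s I = 1 := by
  have hpq_self (i : ι) : p i * q i + q i * p i = 1 := by simpa using hpq i i
  have hpq_ne {i j : ι} (hij : i ≠ j) : Anticommute (p i) (q j) :=
    (hpq i j).trans (if_neg hij)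
  induction s using Finset.induction_on_min with
  | empty => simp [occupationProj, incProd, decProd]
  | insert a s ha ih =>
    have hpp_a (i) (hi : i ∈ s) : Anticommute (p a) (p i) := hpp (ha i hi).ne
    have hqq_a (i) (hi : i ∈ s) : Anticommute (q a) (q i) := hqq (ha i hi).ne
    have hpq_a (i) (hi : i ∈ s) : Anticommute (p a) (q i) := hpq_ne (ha i hi).ne
    have hqp_a (i) (hi : i ∈ s) : Anticommute (q a) (p i) := (hpq_ne (ha i hi).ne').symm
    have empty_mode (I) (hI : I ∈ s.powerset) :
        occupationProj p q (insert a s) I = p a * q a * occupationProj p q s I :=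
      occupationProj_insert_left ha (Finset.mem_powerset.1 hI)
        (fun i hi => (hpp_a i hi).mul_left (hqp_a i hi))
        fun i hi => (hpq_a i hi).mul_left (hqq_a i hi)
    have occupied_mode (I) (hI : I ∈ s.powerset) :
        occupationProj p q (insert a s) (insert a I) = q a * p a * occupationProj p q s I :=
      occupationProj_insert_insert ha (Finset.mem_powerset.1 hI)
        (mul_mul_eq_self_of_mul_add_mul_eq_one (hq a) (hpq_self a)) hpp_a hpq_a hqp_a hqq_a
    rw [Finset.sum_powerset_insert fun h => (ha a h).false, Finset.sum_congr rfl empty_mode,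
      Finset.sum_congr rfl occupied_mode, ← Finset.mul_sum, ← Finset.mul_sum, ih, mul_one, mul_one,
      hpq_self]

end OccupationProj

theorem stmt_2 {r : ℕ} (hr : 0 < r) {V : Type} [AddCommGroup V]
    (p q : Fin r → AddMonoid.End V) (hpq : IsCliffordRep p q) :
    ∑ I : Finset (Fin r),
      qProd q I * pProd p Finset.univ * qProd q Finset.univ * pProd p I = 1 := by
  obtain ⟨-, hq, hpp, hqq, hpq⟩ := hpq
  exact Finset.powerset_univ (α := Fin r) ▸
    stmt_2_general hq (fun i j _ => hpp i j) (fun i j _ => hqq i j) hpq Finset.univ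
end

section
/- Let W, V be abelian groups, let ≤ be a linear order on the set of all subsets of [r], and let 𝔢_I : W → V and 𝔣_I : V → W (I ⊆ [r]) be additive maps such that 𝔣_I ∘ 𝔢_J = δ_{IJ}·id_W whenever J ≤ I. Define the orthogonalization e_I := 𝔢_I and f_I := 𝔣_I ∘ (id_V − 𝔢_{J_1}∘𝔣_{J_1}) ∘ ⋯ ∘ (id_V − 𝔢_{J_m}∘𝔣_{J_m}), where J_1 < J_2 < ⋯ < J_m enumerates the subsets J with I < J. Then: (a) f_J ∘ e_I = δ_{IJ}·id_W for ALL subsets I, J ⊆ [r]; and (b) (id_V − 𝔢_{K_1}∘𝔣_{K_1}) ∘ ⋯ ∘ (id_V − 𝔢_{K_N}∘𝔣_{K_N}) = id_V − Σ_{I ⊆ [r]} e_I ∘ f_I, where K_1 < K_2 < ⋯ < K_N enumerates all subsets of [r] in increasing order. -/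
/-!
Statement 3: orthogonalization of a semi-orthogonal family of maps.

The linear order on the set of all subsets of `[r]` is encoded by an arbitrary
bijection `π : Finset (Fin r) ≃ Fin (2 ^ r)`:  `I ≤ J` iff `π I ≤ π J`.
-/

/-- View an additive endomorphism as an element of the endomorphism ring. -/
def toEnd {V : Type*} [AddCommGroup V] (f : V →+ V) : AddMonoid.End V := f

/-- The ordered product `(1 - 𝔢_{J₁}∘𝔣_{J₁}) ∘ ⋯ ∘ (1 - 𝔢_{J_m}∘𝔣_{J_m})`, where
`J₁ < ⋯ < J_m` enumerates the subsets `J` with `I < J` in increasing order (with respect to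
the linear order encoded by `π`). -/
def afterProd {r : ℕ} {W V : Type*} [AddCommGroup W] [AddCommGroup V]
    (π : Finset (Fin r) ≃ Fin (2 ^ r))
    (fe : Finset (Fin r) → W →+ V) (ff : Finset (Fin r) → V →+ W)
    (I : Finset (Fin r)) : AddMonoid.End V :=
  (((List.finRange (2 ^ r)).filter (fun s => π I < s)).map
    (fun s => (1 : AddMonoid.End V) - toEnd ((fe (π.symm s)).comp (ff (π.symm s))))).prod

/-- The orthogonalization `f_I := 𝔣_I ∘ (1 - 𝔢_{J₁}∘𝔣_{J₁}) ∘ ⋯ ∘ (1 - 𝔢_{J_m}∘𝔣_{J_m})`. -/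
def orthF {r : ℕ} {W V : Type*} [AddCommGroup W] [AddCommGroup V]
    (π : Finset (Fin r) ≃ Fin (2 ^ r))
    (fe : Finset (Fin r) → W →+ V) (ff : Finset (Fin r) → V →+ W)
    (I : Finset (Fin r)) : V →+ W :=
  (ff I).comp (afterProd π fe ff I)

/-- The full ordered product `(1 - 𝔢_{K₁}∘𝔣_{K₁}) ∘ ⋯ ∘ (1 - 𝔢_{K_N}∘𝔣_{K_N})` over all
subsets of `[r]` in increasing order. -/
def fullProd {r : ℕ} {W V : Type*} [AddCommGroup W] [AddCommGroup V]
    (π : Finset (Fin r) ≃ Fin (2 ^ r))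
    (fe : Finset (Fin r) → W →+ V) (ff : Finset (Fin r) → V →+ W) : AddMonoid.End V :=
  ((List.finRange (2 ^ r)).map
    (fun s => (1 : AddMonoid.End V) - toEnd ((fe (π.symm s)).comp (ff (π.symm s))))).prod

/-!
Put `p i = e i ∘ f i`. Semi-orthogonality says that on the image of `e i` the map `p i` is the
identity and every `p j` with `i < j` vanishes. Hence an increasing product of factors `1 - p j`
fixes the image of `e i` when all `j` exceed `i`, and kills it when `i` occurs among the `j`: the
factors to the right of `1 - p i` act as the identity, and then `1 - p i` annihilates. This gives
orthogonality. The product formula is a telescoping identity valid for arbitrary elements `p i` of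
a ring: `(1 - p i) * Q = Q - p i * Q`.
-/

/-- The ordered product `(1 - p i₁) * ⋯ * (1 - p iₙ)` over a list `[i₁, …, iₙ]` in a possibly
noncommutative ring. -/
def oneSubProd {ι R : Type*} [Ring R] (p : ι → R) (l : List ι) : R :=
  (l.map fun i => 1 - p i).prod

section OneSubProd

variable {ι R M : Type*} [Ring R] [AddCommGroup M] [Module R M] {p : ι → R} {v : M}

@[simp]
theorem oneSubProd_nil (p : ι → R) : oneSubProd p [] = 1 := rfl

@[simp]
theorem oneSubProd_cons (p : ι → R) (i : ι) (l : List ι) :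
    oneSubProd p (i :: l) = (1 - p i) * oneSubProd p l := by
  simp [oneSubProd]

theorem oneSubProd_append (p : ι → R) (l₁ l₂ : List ι) :
    oneSubProd p (l₁ ++ l₂) = oneSubProd p l₁ * oneSubProd p l₂ := by
  simp [oneSubProd]

theorem oneSubProd_smul_eq_self {l : List ι} (hv : ∀ i ∈ l, p i • v = 0) :
    oneSubProd p l • v = v := by
  induction l with
  | nil => simp
  | cons i l ih =>
    obtain ⟨hi, hl⟩ := List.forall_mem_cons.mp hv
    rw [oneSubProd_cons, mul_smul, ih hl, sub_smul, one_smul, hi, sub_zero]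

theorem oneSubProd_smul_eq_zero [Preorder ι] {l : List ι} (hl : l.SortedLT) {i : ι} (hi : i ∈ l)
    (hfix : p i • v = v) (hgt : ∀ j ∈ l, i < j → p j • v = 0) :
    oneSubProd p l • v = 0 := by
  obtain ⟨l₁, l₂, rfl⟩ := List.append_of_mem hi
  have lt_of_mem : ∀ j ∈ l₂, i < j :=
    (List.pairwise_cons.mp (List.pairwise_append.mp hl.pairwise).2.1).1
  have tail_smul : oneSubProd p l₂ • v = v :=
    oneSubProd_smul_eq_self fun j hj => hgt j (by simp [hj]) (lt_of_mem j hj)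
  rw [oneSubProd_append, oneSubProd_cons, mul_smul, mul_smul, tail_smul, sub_smul, one_smul, hfix,
    sub_self, smul_zero]

theorem oneSubProd_eq_one_sub_sum [Preorder ι] [DecidableLT ι] (p : ι → R) {l : List ι}
    (hl : l.SortedLT) :
    oneSubProd p l = 1 - (l.map fun i => p i * oneSubProd p (l.filter (i < ·))).sum := by
  induction l with
  | nil => simp
  | cons i l ih =>
    obtain ⟨lt_of_mem, pairwise_l⟩ := List.pairwise_cons.mp hl.pairwise
    have filter_head : (i :: l).filter (i < ·) = l := by
      rw [List.filter_cons_of_neg (by simp), List.filter_eq_self]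
      simpa using lt_of_mem
    have filter_tail : ∀ j ∈ l, (i :: l).filter (j < ·) = l.filter (j < ·) := fun j hj =>
      List.filter_cons_of_neg (by simpa using (lt_of_mem j hj).not_gt)
    have sum_tail : (l.map fun j => p j * oneSubProd p ((i :: l).filter (j < ·))) =
        l.map fun j => p j * oneSubProd p (l.filter (j < ·)) :=
      List.map_congr_left fun j hj => by rw [filter_tail j hj]
    calc oneSubProd p (i :: l)
        = oneSubProd p l - p i * oneSubProd p l := by rw [oneSubProd_cons, sub_mul, one_mul]
      _ = 1 - (p i * oneSubProd p l +
            (l.map fun j => p j * oneSubProd p (l.filter (j < ·))).sum) := by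
          nth_rewrite 1 [ih pairwise_l.sortedLT]
          abel
      _ = _ := by rw [List.map_cons, List.sum_cons, filter_head, sum_tail]

end OneSubProd

section Orthogonalization

variable {ι V : Type*} {W : ι → Type*} [AddCommGroup V] [∀ i, AddCommGroup (W i)]
  (e : ∀ i, W i →+ V) (f : ∀ i, V →+ W i)

/-- The endomorphism `e i ∘ f i` of `V`, a projection when `f i ∘ e i = id`; the factors of the
ordered products are `1 - compEnd e f i`. -/
def compEnd (i : ι) : AddMonoid.End V :=
  toEnd ((e i).comp (f i))

/-- The orthogonalization of `f` with respect to `e` along a list `l`: the map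
`f i ∘ (1 - e j₁ ∘ f j₁) ∘ ⋯ ∘ (1 - e jₘ ∘ f jₘ)`, where `j₁, …, jₘ` are the entries of `l` that
exceed `i`, in the order of `l`. -/
def orthogonalization [LT ι] [DecidableLT ι] (l : List ι) (i : ι) : V →+ W i :=
  (f i).comp (oneSubProd (compEnd e f) (l.filter (i < ·)) : AddMonoid.End V)

variable {e f}

theorem orthogonalization_apply [LT ι] [DecidableLT ι] (l : List ι) (i : ι) (v : V) :
    orthogonalization e f l i v = f i (oneSubProd (compEnd e f) (l.filter (i < ·)) • v) :=
  rfl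

theorem compEnd_smul_apply_self {i : ι} {x : W i} (h : f i (e i x) = x) :
    compEnd e f i • e i x = e i x :=
  congrArg (e i) h

theorem compEnd_smul_apply_eq_zero {i j : ι} {x : W i} (h : f j (e i x) = 0) :
    compEnd e f j • e i x = 0 :=
  (congrArg (e j) h).trans (map_zero (e j))

theorem oneSubProd_compEnd_eq_one_sub_sum [Preorder ι] [DecidableLT ι] {l : List ι}
    (e : ∀ i, W i →+ V) (f : ∀ i, V →+ W i) (hl : l.SortedLT) :
    oneSubProd (compEnd e f) l = 1 - (l.map (compEnd e (orthogonalization e f l))).sum :=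
  oneSubProd_eq_one_sub_sum (compEnd e f) hl

variable [LinearOrder ι] {l : List ι}

/-- `Pi.single i x j` is the Kronecker delta `δ_{ij} x` for groups `W i` that vary with `i`. -/
theorem orthogonalization_apply_apply (hl : l.SortedLT)
    (hso : ∀ i ∈ l, ∀ j ∈ l, i ≤ j → ∀ x, f j (e i x) = Pi.single i x j)
    {i j : ι} (hi : i ∈ l) (hj : j ∈ l) (x : W i) :
    orthogonalization e f l j (e i x) = Pi.single i x j := by
  have smul_eq_zero_of_lt : ∀ k ∈ l, i < k → compEnd e f k • e i x = 0 := fun k hk hik =>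
    compEnd_smul_apply_eq_zero <| by
      rw [hso i hi k hk hik.le, Pi.single_eq_of_ne hik.ne']
  have smul_self : compEnd e f i • e i x = e i x :=
    compEnd_smul_apply_self <| by rw [hso i hi i hi le_rfl, Pi.single_eq_same]
  rw [orthogonalization_apply]
  rcases le_or_gt i j with hij | hji
  · have prod_smul : oneSubProd (compEnd e f) (l.filter (j < ·)) • e i x = e i x :=
      oneSubProd_smul_eq_self fun k hk => by
        obtain ⟨hkl, hjk⟩ := List.mem_filter.mp hk
        exact smul_eq_zero_of_lt k hkl (hij.trans_lt (by simpa using hjk))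
    rw [prod_smul, hso i hi j hj hij]
  · have prod_smul : oneSubProd (compEnd e f) (l.filter (j < ·)) • e i x = 0 :=
      oneSubProd_smul_eq_zero (hl.pairwise.filter _).sortedLT (by simp [hi, hji]) smul_self
        fun k hk => smul_eq_zero_of_lt k (List.mem_of_mem_filter hk)
    rw [prod_smul, map_zero, Pi.single_eq_of_ne hji.ne]

theorem stmt_3_general (e : ∀ i, W i →+ V) (f : ∀ i, V →+ W i) (hl : l.SortedLT)
    (hso : ∀ i ∈ l, ∀ j ∈ l, i ≤ j → ∀ x, f j (e i x) = Pi.single i x j) :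
    (∀ i ∈ l, ∀ j ∈ l, ∀ x, orthogonalization e f l j (e i x) = Pi.single i x j) ∧
    oneSubProd (compEnd e f) l = 1 - (l.map (compEnd e (orthogonalization e f l))).sum :=
  ⟨fun _ hi _ hj => orthogonalization_apply_apply hl hso hi hj,
    oneSubProd_compEnd_eq_one_sub_sum e f hl⟩

end Orthogonalization

theorem comp_eq_ite_iff_apply_eq_single {ι W V : Type*} [DecidableEq ι] [AddCommGroup W]
    [AddCommGroup V] {e : W →+ V} {f : V →+ W} {i j : ι} :
    (f.comp e = if i = j then AddMonoidHom.id W else 0) ↔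
      ∀ x, f (e x) = Pi.single (M := fun _ => W) i x j := by
  rw [DFunLike.ext_iff]
  refine forall_congr' fun x => ?_
  rcases eq_or_ne i j with rfl | hij
  · simp
  · simp [hij, hij.symm]

section Subsets

variable {r : ℕ} {W V : Type*} [AddCommGroup W] [AddCommGroup V]
  (π : Finset (Fin r) ≃ Fin (2 ^ r))
  (fe : Finset (Fin r) → W →+ V) (ff : Finset (Fin r) → V →+ W)

theorem orthF_symm_apply (s : Fin (2 ^ r)) :
    orthF π fe ff (π.symm s) = orthogonalization (W := fun _ => W) (fun t => fe (π.symm t))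
      (fun t => ff (π.symm t)) (List.finRange (2 ^ r)) s := by
  rw [orthF, afterProd, π.apply_symm_apply]
  rfl

theorem sum_toEnd_comp_orthF :
    ∑ I, toEnd ((fe I).comp (orthF π fe ff I)) =
      ((List.finRange (2 ^ r)).map (compEnd (W := fun _ => W) (fun s => fe (π.symm s))
        (orthogonalization (fun s => fe (π.symm s)) (fun s => ff (π.symm s))
          (List.finRange (2 ^ r))))).sum := by
  rw [← π.symm.sum_comp, Fin.sum_univ_def]
  simp only [orthF_symm_apply]
  rfl

end Subsets

theorem stmt_3 {r : ℕ} (hr : 0 < r) {W V : Type} [AddCommGroup W] [AddCommGroup V]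
    (π : Finset (Fin r) ≃ Fin (2 ^ r))
    (fe : Finset (Fin r) → W →+ V) (ff : Finset (Fin r) → V →+ W)
    (hso : ∀ I J : Finset (Fin r), π J ≤ π I →
      (ff I).comp (fe J) = if I = J then AddMonoidHom.id W else 0) :
    (∀ I J : Finset (Fin r),
      (orthF π fe ff J).comp (fe I) = if I = J then AddMonoidHom.id W else 0) ∧
    fullProd π fe ff =
      1 - ∑ I : Finset (Fin r), toEnd ((fe I).comp (orthF π fe ff I)) := by
  have semiorthogonal : ∀ s t, s ≤ t → ∀ x,
      ff (π.symm t) (fe (π.symm s) x) = Pi.single (M := fun _ => W) s x t := fun s t hst =>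
    comp_eq_ite_iff_apply_eq_single.mp <| by
      simpa [eq_comm] using hso (π.symm t) (π.symm s) (by simpa using hst)
  obtain ⟨orthogonal, prod_eq⟩ := stmt_3_general (W := fun _ => W) (fun s => fe (π.symm s))
    (fun s => ff (π.symm s)) (List.sortedLT_finRange (2 ^ r)) fun s _ t _ => semiorthogonal s t
  refine ⟨π.symm.surjective.forall₂.mpr fun s t => ?_, ?_⟩
  · rw [orthF_symm_apply]
    simpa using comp_eq_ite_iff_apply_eq_single.mpr
      (orthogonal s (List.mem_finRange s) t (List.mem_finRange t))
  · rw [sum_toEnd_comp_orthF]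
    exact prod_eq
end

section
/- Let W, V be abelian groups, (p_i, q_i) a Cl(r)-representation on V, and e : W → V, f : V → W additive maps with p_i ∘ e = 0 and f ∘ q_i = 0 for all i ∈ [r], f ∘ e = id_W, and e ∘ f = p_{[r]} ∘ q_{[r]}. Set e_I := q_I ∘ e and f_I := f ∘ p_I for I ⊆ [r]. Then for each i ∈ [r]: p_i = Σ_{I ⊆ [r]∖{i}} (−1)^{#{j ∈ I : j < i}} e_I ∘ f_{I∪{i}} and q_i = Σ_{I ⊆ [r]∖{i}} (−1)^{#{j ∈ I : j < i}} e_{I∪{i}} ∘ f_I, as additive endomorphisms of V. -/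
/-!
Everything takes place in the endomorphism ring. Iterating `1 = pₐ qₐ + qₐ (pₐ qₐ) pₐ` over all
indices `a`, where `pₐ qₐ` commutes with `pⱼ` and `qⱼ` for `j ≠ a`, yields the resolution of the
identity `1 = ∑ I, q_I (p_{[r]} q_{[r]}) p_I`. Multiplying it by `qᵢ` on the left kills the terms
with `i ∈ I` and, after sorting, turns `q_I` into `± q_{I ∪ {i}}` in the others. The formula for
`pᵢ` is the same statement in the opposite ring, where the roles of `p` and `q` are exchanged.
-/

open Finset MulOpposite

section OrderedProducts

variable {ι M : Type*} [LinearOrder ι] [Monoid M]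

/-- The product of the `x i`, `i ∈ I`, with indices increasing from left to right. It extends
`qProd` to families in a monoid indexed by a linear order. -/
def increasingProd (x : ι → M) (I : Finset ι) : M :=
  ((I.sort (· ≤ ·)).map x).prod

/-- The product of the `x i`, `i ∈ I`, with indices decreasing from left to right. It extends
`pProd` to families in a monoid indexed by a linear order. -/
def decreasingProd (x : ι → M) (I : Finset ι) : M :=
  ((I.sort (· ≤ ·)).reverse.map x).prod

@[simp]
lemma increasingProd_empty (x : ι → M) : increasingProd x ∅ = 1 := by
  simp [increasingProd]

@[simp]
lemma decreasingProd_empty (x : ι → M) : decreasingProd x ∅ = 1 := by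
  simp [decreasingProd]

lemma increasingProd_insert_of_forall_lt (x : ι → M) {a : ι} {I : Finset ι}
    (ha : ∀ b ∈ I, a < b) : increasingProd x (insert a I) = x a * increasingProd x I := by
  have ha_notMem : a ∉ I := fun haI => (ha a haI).false
  simp [increasingProd, sort_insert _ (fun b hb => (ha b hb).le) ha_notMem]

lemma decreasingProd_insert_of_forall_lt (x : ι → M) {a : ι} {I : Finset ι}
    (ha : ∀ b ∈ I, a < b) : decreasingProd x (insert a I) = decreasingProd x I * x a := by
  have ha_notMem : a ∉ I := fun haI => (ha a haI).false
  simp [decreasingProd, sort_insert _ (fun b hb => (ha b hb).le) ha_notMem]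

lemma op_increasingProd (x : ι → M) (I : Finset ι) :
    op (increasingProd x I) = decreasingProd (op ∘ x) I := by
  simp [increasingProd, decreasingProd, op_list_prod]

lemma op_decreasingProd (x : ι → M) (I : Finset ι) :
    op (decreasingProd x I) = increasingProd (op ∘ x) I := by
  simp [increasingProd, decreasingProd, op_list_prod]

lemma commute_increasingProd {x : ι → M} {I : Finset ι} {y : M}
    (h : ∀ j ∈ I, Commute y (x j)) : Commute y (increasingProd x I) :=
  Commute.list_prod_right _ _ (by simpa using h)

lemma commute_decreasingProd {x : ι → M} {I : Finset ι} {y : M}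
    (h : ∀ j ∈ I, Commute y (x j)) : Commute y (decreasingProd x I) :=
  Commute.list_prod_right _ _ (by simpa using h)

end OrderedProducts

section Anticommuting

variable {ι R : Type*} [Ring R]

lemma commute_mul_of_anticommute {a b c : R}
    (hac : a * c + c * a = 0) (hbc : b * c + c * b = 0) : Commute (a * b) c :=
  calc a * b * c = a * -(c * b) := by rw [mul_assoc, eq_neg_of_add_eq_zero_left hbc]
    _ = -(a * c) * b := by rw [mul_neg, neg_mul, mul_assoc]
    _ = c * (a * b) := by rw [eq_neg_of_add_eq_zero_left hac, neg_neg, mul_assoc]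

variable [LinearOrder ι] {x : ι → R}

lemma mul_increasingProd_of_mem (hsq : ∀ i, x i * x i = 0)
    (hanti : ∀ i j, x i * x j + x j * x i = 0) {i : ι} {I : Finset ι} (hi : i ∈ I) :
    x i * increasingProd x I = 0 := by
  induction I using Finset.induction_on_min with
  | empty => simp at hi
  | insert a I ha ih =>
    rw [increasingProd_insert_of_forall_lt x ha, ← mul_assoc]
    rcases mem_insert.1 hi with rfl | hi
    · rw [hsq, zero_mul]
    · rw [eq_neg_of_add_eq_zero_left (hanti i a), neg_mul, mul_assoc, ih hi, mul_zero, neg_zero]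

lemma mul_increasingProd_of_notMem (hanti : ∀ i j, x i * x j + x j * x i = 0)
    {i : ι} {I : Finset ι} (hi : i ∉ I) :
    x i * increasingProd x I = (-1 : ℤ) ^ #{j ∈ I | j < i} • increasingProd x (insert i I) := by
  induction I using Finset.induction_on_min with
  | empty => simp [increasingProd]
  | insert a I ha ih =>
    obtain ⟨hia, hiI⟩ : i ≠ a ∧ i ∉ I := by simpa using hi
    rcases hia.lt_or_gt with hia | hai
    · have hi_min : ∀ b ∈ insert a I, i < b :=
        (forall_mem_insert _ _ _).2 ⟨hia, fun b hb => hia.trans (ha b hb)⟩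
      have hcount : #{j ∈ insert a I | j < i} = 0 := by
        simpa [filter_eq_empty_iff] using fun b hb => (hi_min b hb).le
      rw [hcount, pow_zero, one_smul, increasingProd_insert_of_forall_lt x hi_min]
    · have ha_min : ∀ b ∈ insert i I, a < b := (forall_mem_insert _ _ _).2 ⟨hai, ha⟩
      have ha_notMem : a ∉ I := fun haI => (ha a haI).false
      have hcount : #{j ∈ insert a I | j < i} = #{j ∈ I | j < i} + 1 := by
        rw [filter_insert, if_pos hai, card_insert_of_notMem (by simp [ha_notMem])]
      calc x i * increasingProd x (insert a I)
          = -(x a * (x i * increasingProd x I)) := by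
            rw [increasingProd_insert_of_forall_lt x ha, ← mul_assoc,
              eq_neg_of_add_eq_zero_left (hanti i a), neg_mul, mul_assoc]
        _ = (-1 : ℤ) ^ #{j ∈ insert a I | j < i} • increasingProd x (insert i (insert a I)) := by
            rw [ih hiI, mul_smul_comm, ← increasingProd_insert_of_forall_lt x ha_min,
              insert_comm, hcount, pow_succ, mul_neg_one, neg_smul]

end Anticommuting

/-- The relations of a `Cl(r)`-representation for elements of an arbitrary ring, with an arbitrary
index type; `IsCliffordRep` is the case of `AddMonoid.End V` and `Fin r`. Working in a ring gives
access to the symmetry `IsCliffordFamily.op`. -/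
structure IsCliffordFamily {ι R : Type*} [Ring R] (p q : ι → R) : Prop where
  p_mul_self (i : ι) : p i * p i = 0
  q_mul_self (i : ι) : q i * q i = 0
  p_anticomm (i j : ι) : p i * p j + p j * p i = 0
  q_anticomm (i j : ι) : q i * q j + q j * q i = 0
  p_mul_q_add_self (i : ι) : p i * q i + q i * p i = 1
  p_q_anticomm {i j : ι} (hij : i ≠ j) : p i * q j + q j * p i = 0

lemma IsCliffordRep.isCliffordFamily {r : ℕ} {V : Type*} [AddCommGroup V]
    {p q : Fin r → AddMonoid.End V} (h : IsCliffordRep p q) : IsCliffordFamily p q := by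
  obtain ⟨hp, hq, hpp, hqq, hpq⟩ := h
  exact ⟨hp, hq, hpp, hqq, fun i => by simpa using hpq i i,
    fun {i j} hij => by simpa [hij] using hpq i j⟩

namespace IsCliffordFamily

variable {ι R : Type*} [Ring R] {p q : ι → R}

protected lemma op (h : IsCliffordFamily p q) : IsCliffordFamily (op ∘ q) (op ∘ p) where
  p_mul_self i := congrArg op (h.q_mul_self i)
  q_mul_self i := congrArg op (h.p_mul_self i)
  p_anticomm i j := congrArg op (h.q_anticomm j i)
  q_anticomm i j := congrArg op (h.p_anticomm j i)
  p_mul_q_add_self i := congrArg op (h.p_mul_q_add_self i)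
  p_q_anticomm hij := congrArg op (h.p_q_anticomm hij.symm)

lemma commute_p_mul_q_p (h : IsCliffordFamily p q) {a j : ι} (hja : j ≠ a) :
    Commute (p a * q a) (p j) :=
  commute_mul_of_anticommute (h.p_anticomm a j) (by rw [add_comm, h.p_q_anticomm hja])

lemma commute_p_mul_q_q (h : IsCliffordFamily p q) {a j : ι} (hja : j ≠ a) :
    Commute (p a * q a) (q j) :=
  commute_mul_of_anticommute (h.p_q_anticomm hja.symm) (h.q_anticomm a j)

lemma q_mul_p_mul_q_mul_p (h : IsCliffordFamily p q) (a : ι) :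
    q a * (p a * q a) * p a = q a * p a := by
  rw [eq_sub_of_add_eq (h.p_mul_q_add_self a), mul_sub, mul_one, ← mul_assoc, h.q_mul_self,
    zero_mul, sub_zero]

variable [LinearOrder ι]

theorem sum_powerset_increasingProd_mul_eq_one (h : IsCliffordFamily p q) (T : Finset ι) :
    ∑ I ∈ T.powerset, increasingProd q I * (decreasingProd p T * increasingProd q T) *
      decreasingProd p I = 1 := by
  induction T using Finset.induction_on_min with
  | empty => simp
  | insert a T ha ih =>
    have ha_notMem : a ∉ T := fun haT => (ha a haT).false
    have hcomm_p : Commute (p a * q a) (decreasingProd p T) :=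
      commute_decreasingProd fun j hj => h.commute_p_mul_q_p (ha j hj).ne'
    have hcomm_q {I : Finset ι} (hI : I ⊆ T) : Commute (p a * q a) (increasingProd q I) :=
      commute_increasingProd fun j hj => h.commute_p_mul_q_q (ha j (hI hj)).ne'
    set E := decreasingProd p T * increasingProd q T with hE
    have hE_insert : decreasingProd p (insert a T) * increasingProd q (insert a T) =
        p a * q a * E := by
      rw [decreasingProd_insert_of_forall_lt p ha, increasingProd_insert_of_forall_lt q ha, hE,
        ← mul_assoc (p a * q a), hcomm_p.eq]
      simp only [mul_assoc]
    have hterm {I : Finset ι} (hI : I ∈ T.powerset) :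
        increasingProd q I * (p a * q a * E) * decreasingProd p I =
          p a * q a * (increasingProd q I * E * decreasingProd p I) := by
      simp only [← mul_assoc, ← (hcomm_q (mem_powerset.1 hI)).eq]
    have hterm_insert {I : Finset ι} (hI : I ∈ T.powerset) :
        increasingProd q (insert a I) * (p a * q a * E) * decreasingProd p (insert a I) =
          q a * (p a * q a) * (increasingProd q I * E * decreasingProd p I) * p a := by
      have haI : ∀ b ∈ I, a < b := fun b hb => ha b (mem_powerset.1 hI hb)
      rw [increasingProd_insert_of_forall_lt q haI, decreasingProd_insert_of_forall_lt p haI,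
        mul_assoc (q a) (p a * q a), ← hterm hI]
      simp only [mul_assoc]
    rw [hE_insert, sum_powerset_insert ha_notMem, sum_congr rfl fun I hI => hterm hI,
      sum_congr rfl fun I hI => hterm_insert hI, ← sum_mul, ← mul_sum, ← mul_sum, ih, mul_one,
      mul_one, h.q_mul_p_mul_q_mul_p, h.p_mul_q_add_self]

variable [Fintype ι]

theorem q_eq_sum (h : IsCliffordFamily p q) (i : ι) :
    q i = ∑ I with i ∉ I, (-1 : ℤ) ^ #{j ∈ I | j < i} •
      (increasingProd q (insert i I) * (decreasingProd p univ * increasingProd q univ) *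
        decreasingProd p I) := by
  set E := decreasingProd p univ * increasingProd q univ
  have hterm_of_mem {I : Finset ι} (hi : i ∈ I) :
      q i * (increasingProd q I * E * decreasingProd p I) = 0 := by
    simp only [← mul_assoc, mul_increasingProd_of_mem h.q_mul_self h.q_anticomm hi, zero_mul]
  have hterm_of_notMem {I : Finset ι} (hi : i ∉ I) :
      q i * (increasingProd q I * E * decreasingProd p I) =
        (-1 : ℤ) ^ #{j ∈ I | j < i} • (increasingProd q (insert i I) * E * decreasingProd p I) := by
    simp only [← mul_assoc, mul_increasingProd_of_notMem h.q_anticomm hi, smul_mul_assoc]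
  calc q i = ∑ I, q i * (increasingProd q I * E * decreasingProd p I) := by
        rw [← mul_sum, ← powerset_univ, h.sum_powerset_increasingProd_mul_eq_one, mul_one]
    _ = ∑ I with i ∉ I, q i * (increasingProd q I * E * decreasingProd p I) :=
        (sum_filter_of_ne fun _ _ => mt hterm_of_mem).symm
    _ = _ := sum_congr rfl fun I hI => hterm_of_notMem (mem_filter.1 hI).2

theorem p_eq_sum (h : IsCliffordFamily p q) (i : ι) :
    p i = ∑ I with i ∉ I, (-1 : ℤ) ^ #{j ∈ I | j < i} •
      (increasingProd q I * (decreasingProd p univ * increasingProd q univ) *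
        decreasingProd p (insert i I)) := by
  apply op_injective
  simpa only [op_sum, op_smul, op_mul, op_increasingProd, op_decreasingProd, mul_assoc,
    Function.comp_apply] using h.op.q_eq_sum i

end IsCliffordFamily

lemma toEnd_comp_comp {V W : Type*} [AddCommGroup V] [AddZeroClass W] {e : W →+ V} {f : V →+ W}
    {E : AddMonoid.End V} (hef : e.comp f = E) (A B : AddMonoid.End V) :
    toEnd ((A.comp e).comp (f.comp B)) = A * E * B := by
  subst hef
  rfl

theorem stmt_5_general {r : ℕ} {W V : Type*} [AddZeroClass W] [AddCommGroup V]
    {p q : Fin r → AddMonoid.End V} (hpq : IsCliffordRep p q) {e : W →+ V} {f : V →+ W}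
    (hef : e.comp f = (pProd p Finset.univ).comp (qProd q Finset.univ)) (i : Fin r) :
    p i = ∑ I ∈ Finset.univ.filter (fun I : Finset (Fin r) => i ∉ I),
        ((-1 : ℤ) ^ signCount I i) •
          toEnd (((qProd q I).comp e).comp (f.comp (pProd p (insert i I)))) ∧
      q i = ∑ I ∈ Finset.univ.filter (fun I : Finset (Fin r) => i ∉ I),
        ((-1 : ℤ) ^ signCount I i) •
          toEnd (((qProd q (insert i I)).comp e).comp (f.comp (pProd p I))) := by
  simp only [toEnd_comp_comp hef]
  exact ⟨hpq.isCliffordFamily.p_eq_sum i, hpq.isCliffordFamily.q_eq_sum i⟩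

theorem stmt_5 {r : ℕ} (hr : 0 < r) {W V : Type} [AddCommGroup W] [AddCommGroup V]
    (p q : Fin r → AddMonoid.End V) (hpq : IsCliffordRep p q)
    (e : W →+ V) (f : V →+ W)
    (hpe : ∀ i : Fin r, (p i).comp e = 0)
    (hfq : ∀ i : Fin r, f.comp (q i) = 0)
    (hfe : f.comp e = AddMonoidHom.id W)
    (hef : e.comp f = (pProd p Finset.univ).comp (qProd q Finset.univ)) :
    ∀ i : Fin r,
      p i = ∑ I ∈ Finset.univ.filter (fun I : Finset (Fin r) => i ∉ I),
        ((-1 : ℤ) ^ signCount I i) •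
          toEnd (((qProd q I).comp e).comp (f.comp (pProd p (insert i I)))) ∧
      q i = ∑ I ∈ Finset.univ.filter (fun I : Finset (Fin r) => i ∉ I),
        ((-1 : ℤ) ^ signCount I i) •
          toEnd (((qProd q (insert i I)).comp e).comp (f.comp (pProd p I))) := by
  exact stmt_5_general hpq hef
end

section
/- For every x in the left ideal 𝔍(r) of 𝔈(r) and every i ∈ [r], the elements x·P_{0,i}, x·Q_{0,i}, x·E, and x·F·P_{0,[r]}·Q_{0,[r]} all lie in 𝔍(r). Consequently, right multiplication by P_{0,i}, by Q_{0,i}, by E, and by F·P_{0,[r]}·Q_{0,[r]} descends to well-defined additive endomorphisms of the quotient left 𝔈(r)-module Λ_r = 𝔈(r)/𝔍(r). -/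
/-- Generators of the infinite-dimensional Clifford algebra `𝔈(r)`. -/
inductive EGen (r : ℕ) : Type
  | P (a : ℤ) (i : Fin r)
  | Q (a : ℤ) (i : Fin r)
  | E
  | F

/-- A generator, viewed inside the free algebra. -/
noncomputable def eg {r : ℕ} (g : EGen r) : FreeAlgebra ℤ (EGen r) := FreeAlgebra.ι ℤ g

/-- The defining relations of `𝔈(r)`. -/
inductive ERel (r : ℕ) : FreeAlgebra ℤ (EGen r) → FreeAlgebra ℤ (EGen r) → Prop
  | Psq : ∀ (a : ℤ) (i : Fin r), ERel r (eg (.P a i) * eg (.P a i)) 0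
  | Qsq : ∀ (a : ℤ) (i : Fin r), ERel r (eg (.Q a i) * eg (.Q a i)) 0
  | EP : ∀ (a : ℤ) (i : Fin r),
      ERel r (eg .E * eg (.P a i)) (eg (.P (a - 1) i) * eg .E)
  | EQ : ∀ (a : ℤ) (i : Fin r),
      ERel r (eg .E * eg (.Q a i)) (eg (.Q (a - 1) i) * eg .E)
  | PP : ∀ (a b : ℤ) (i j : Fin r),
      ERel r (eg (.P a i) * eg (.P b j) + eg (.P b j) * eg (.P a i)) 0
  | QQ : ∀ (a b : ℤ) (i j : Fin r),
      ERel r (eg (.Q a i) * eg (.Q b j) + eg (.Q b j) * eg (.Q a i)) 0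
  | PQ : ∀ (a b : ℤ) (i j : Fin r),
      ERel r (eg (.P a i) * eg (.Q b j) + eg (.Q b j) * eg (.P a i))
        (if i = j ∧ a = b then 1 else 0)
  | EFone : ERel r (eg .E * eg .F) 1
  | FEone : ERel r (eg .F * eg .E) 1

/-- The infinite-dimensional Clifford algebra `𝔈(r)`, presented by generators and
relations. -/
abbrev EAlg (r : ℕ) := RingQuot (ERel r)

/-- The generator `P_{a,i}` of `𝔈(r)`. -/
noncomputable def genP {r : ℕ} (a : ℤ) (i : Fin r) : EAlg r :=
  RingQuot.mkRingHom (ERel r) (eg (.P a i))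

/-- The generator `Q_{a,i}` of `𝔈(r)`. -/
noncomputable def genQ {r : ℕ} (a : ℤ) (i : Fin r) : EAlg r :=
  RingQuot.mkRingHom (ERel r) (eg (.Q a i))

/-- The generator `E` of `𝔈(r)`. -/
noncomputable def genE {r : ℕ} : EAlg r := RingQuot.mkRingHom (ERel r) (eg .E)

/-- The generator `F` of `𝔈(r)`. -/
noncomputable def genF {r : ℕ} : EAlg r := RingQuot.mkRingHom (ERel r) (eg .F)

/-- The ordered product `P_{a,I} := P_{a,a_k} ⋯ P_{a,a_0}` for `I = {a_0 < ⋯ < a_k}`. -/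
noncomputable def genPI {r : ℕ} (a : ℤ) (I : Finset (Fin r)) : EAlg r :=
  ((I.sort (· ≤ ·)).reverse.map (genP a)).prod

/-- The ordered product `Q_{a,I} := Q_{a,a_0} ⋯ Q_{a,a_k}` for `I = {a_0 < ⋯ < a_k}`. -/
noncomputable def genQI {r : ℕ} (a : ℤ) (I : Finset (Fin r)) : EAlg r :=
  ((I.sort (· ≤ ·)).map (genQ a)).prod

/-- The left ideal `𝔍(r)` of `𝔈(r)` generated by the `P_{a,i}` with `a > 0`. -/
noncomputable def JId (r : ℕ) : Ideal (EAlg r) :=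
  Ideal.span {x | ∃ (a : ℤ) (i : Fin r), 0 < a ∧ x = genP a i}

/-- The quotient left `𝔈(r)`-module `Λ_r := 𝔈(r)/𝔍(r)`. -/
abbrev LambdaMod (r : ℕ) := EAlg r ⧸ JId r

/-!
Statement 12: for every `x ∈ 𝔍(r)` and `i ∈ [r]`, the elements `x·P_{0,i}`, `x·Q_{0,i}`,
`x·E`, `x·F·P_{0,[r]}·Q_{0,[r]}` lie in `𝔍(r)`; consequently right multiplication by each
of these elements descends to a well-defined additive endomorphism of `Λ_r = 𝔈(r)/𝔍(r)`.
-/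

/-!
The elements `y` with `𝔍(r) y ⊆ 𝔍(r)` form a subsemiring, and `y` belongs to it as soon as
`P_{a,i} y ∈ 𝔍(r)` for all `a > 0`. The elements `P_{b,j}`, and the `Q_{b,j}` with `b ≤ 0`,
qualify because they anticommute with these `P_{a,i}`, and `E` qualifies because moving `P_{a,i}`
past it raises the index `a`. Moving past `F` lowers the index, which leaves the set of generators
of `𝔍(r)` only for `a = 1`; there `P_{1,i} F = F P_{0,i}`, and `P_{0,i} P_{0,[r]} = 0`. Hence
`F P_{0,[r]}` qualifies, and so does its product with `Q_{0,[r]}`.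
-/

section Idealizer

/-- The idealizer of a left ideal `I`: the largest subsemiring containing `I` in which `I` is a
two-sided ideal. Its elements are those whose right multiplication descends to `R ⧸ I`. -/
def idealizer {R : Type*} [Semiring R] (I : Ideal R) : Subsemiring R where
  carrier := {y | ∀ x ∈ I, x * y ∈ I}
  mul_mem' {y z} hy hz x hx := by
    rw [← mul_assoc]
    exact hz _ (hy x hx)
  one_mem' x hx := by rwa [mul_one]
  add_mem' {y z} hy hz x hx := by
    rw [mul_add]
    exact I.add_mem (hy x hx) (hz x hx)
  zero_mem' x _ := by
    rw [mul_zero]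
    exact I.zero_mem

theorem mem_idealizer_span_iff {R : Type*} [Semiring R] {s : Set R} {y : R} :
    y ∈ idealizer (Ideal.span s) ↔ ∀ x ∈ s, x * y ∈ Ideal.span s :=
  Submodule.span_le (p := Submodule.comap (LinearMap.toSpanSingleton R R y) (Ideal.span s))

variable {R : Type*} [Ring R] {I : Ideal R} {x y : R}

/-- The endomorphism of the left module `R ⧸ I` induced by right multiplication by an element of the
idealizer of `I`. -/
def quotientMulRight (hy : y ∈ idealizer I) : R ⧸ I →ₗ[R] R ⧸ I :=
  I.mapQ I (LinearMap.toSpanSingleton R R y) hy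

theorem quotientMulRight_mk (hy : y ∈ idealizer I) (x : R) :
    quotientMulRight hy (Submodule.Quotient.mk x) = Submodule.Quotient.mk (x * y) :=
  rfl

theorem mul_mem_of_anticommute (hx : x ∈ I) (hxy : x * y = -(y * x)) : x * y ∈ I := by
  rw [hxy]
  exact I.neg_mem (I.mul_mem_left y hx)

end Idealizer

theorem mul_list_prod_eq_zero_of_anticommute {R : Type*} [Ring R] {x : R} {l : List R}
    (hx : x ∈ l) (hsq : x * x = 0) (hanti : ∀ y ∈ l, x * y = -(y * x)) : x * l.prod = 0 := by
  induction l with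
  | nil => simp at hx
  | cons y l ih =>
    rw [List.prod_cons, ← mul_assoc]
    rcases List.mem_cons.mp hx with rfl | hxl
    · rw [hsq, zero_mul]
    · have hprod : x * l.prod = 0 := ih hxl fun z hz => hanti z (List.mem_cons_of_mem y hz)
      rw [hanti y List.mem_cons_self, neg_mul, mul_assoc, hprod, mul_zero, neg_zero]

section Relations

variable {r : ℕ}

theorem genP_mul_self (a : ℤ) (i : Fin r) : genP a i * genP a i = 0 := by
  simpa [genP] using RingQuot.mkRingHom_rel (ERel.Psq a i)

theorem genP_mul_genP (a b : ℤ) (i j : Fin r) :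
    genP a i * genP b j = -(genP b j * genP a i) :=
  eq_neg_of_add_eq_zero_left <| by
    simpa [genP] using RingQuot.mkRingHom_rel (ERel.PP a b i j)

theorem genP_mul_genQ_of_ne {a b : ℤ} (hab : a ≠ b) (i j : Fin r) :
    genP a i * genQ b j = -(genQ b j * genP a i) :=
  eq_neg_of_add_eq_zero_left <| by
    simpa [genP, genQ, hab] using RingQuot.mkRingHom_rel (ERel.PQ a b i j)

theorem genE_mul_genP (a : ℤ) (i : Fin r) : genE * genP a i = genP (a - 1) i * genE := by
  simpa [genE, genP] using RingQuot.mkRingHom_rel (ERel.EP a i)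

theorem genE_mul_genF : (genE : EAlg r) * genF = 1 := by
  simpa [genE, genF] using RingQuot.mkRingHom_rel (ERel.EFone (r := r))

theorem genF_mul_genE : (genF : EAlg r) * genE = 1 := by
  simpa [genE, genF] using RingQuot.mkRingHom_rel (ERel.FEone (r := r))

theorem genP_mul_genE (a : ℤ) (i : Fin r) : genP a i * genE = genE * genP (a + 1) i := by
  rw [genE_mul_genP, add_sub_cancel_right]

theorem genP_mul_genF (a : ℤ) (i : Fin r) : genP a i * genF = genF * genP (a - 1) i :=
  calc
    genP a i * genF = genF * (genE * genP a i) * genF := by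
      rw [← mul_assoc, genF_mul_genE, one_mul]
    _ = genF * genP (a - 1) i * (genE * genF) := by
      rw [genE_mul_genP]
      simp only [mul_assoc]
    _ = genF * genP (a - 1) i := by rw [genE_mul_genF, mul_one]

theorem genP_mul_genPI_of_mem (a : ℤ) {i : Fin r} {I : Finset (Fin r)} (hi : i ∈ I) :
    genP a i * genPI a I = 0 := by
  refine mul_list_prod_eq_zero_of_anticommute
    (List.mem_map_of_mem (by simpa using hi)) (genP_mul_self a i) fun y hy => ?_
  obtain ⟨j, -, rfl⟩ := List.mem_map.mp hy
  exact genP_mul_genP a a i j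

end Relations

section IdealizerJId

variable {r : ℕ}

theorem genP_mem_JId {a : ℤ} (ha : 0 < a) (i : Fin r) : genP a i ∈ JId r :=
  Ideal.subset_span ⟨a, i, ha, rfl⟩

theorem mem_idealizer_JId_iff {y : EAlg r} :
    y ∈ idealizer (JId r) ↔ ∀ a i, 0 < a → genP a i * y ∈ JId r :=
  mem_idealizer_span_iff.trans
    ⟨fun h a i ha => h _ ⟨a, i, ha, rfl⟩, fun h _ ⟨a, i, ha, hx⟩ => hx ▸ h a i ha⟩

theorem genP_mem_idealizer (b : ℤ) (j : Fin r) : genP b j ∈ idealizer (JId r) :=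
  mem_idealizer_JId_iff.mpr fun a i ha =>
    mul_mem_of_anticommute (genP_mem_JId ha i) (genP_mul_genP a b i j)

theorem genQ_mem_idealizer {b : ℤ} (hb : b ≤ 0) (j : Fin r) : genQ b j ∈ idealizer (JId r) :=
  mem_idealizer_JId_iff.mpr fun _ i ha =>
    mul_mem_of_anticommute (genP_mem_JId ha i) (genP_mul_genQ_of_ne (hb.trans_lt ha).ne' i j)

theorem genE_mem_idealizer : genE ∈ idealizer (JId r) :=
  mem_idealizer_JId_iff.mpr fun a i ha => by
    rw [genP_mul_genE]
    exact (JId r).mul_mem_left genE (genP_mem_JId (by lia) i)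

theorem genPI_mem_idealizer (b : ℤ) (I : Finset (Fin r)) : genPI b I ∈ idealizer (JId r) :=
  list_prod_mem <| List.forall_mem_map.mpr fun j _ => genP_mem_idealizer b j

theorem genQI_mem_idealizer {b : ℤ} (hb : b ≤ 0) (I : Finset (Fin r)) :
    genQI b I ∈ idealizer (JId r) :=
  list_prod_mem <| List.forall_mem_map.mpr fun j _ => genQ_mem_idealizer hb j

theorem genF_mul_genPI_univ_mem_idealizer :
    genF * genPI 0 Finset.univ ∈ idealizer (JId r) :=
  mem_idealizer_JId_iff.mpr fun a i ha => by
    rw [← mul_assoc, genP_mul_genF, mul_assoc]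
    refine (JId r).mul_mem_left genF ?_
    obtain rfl | ha' : a = 1 ∨ 0 < a - 1 := by lia
    · rw [sub_self, genP_mul_genPI_of_mem 0 (Finset.mem_univ i)]
      exact (JId r).zero_mem
    · exact genPI_mem_idealizer 0 Finset.univ _ (genP_mem_JId ha' i)

end IdealizerJId

theorem stmt_12 {r : ℕ} (hr : 0 < r) :
    (∀ x ∈ JId r, ∀ i : Fin r,
      x * genP 0 i ∈ JId r ∧ x * genQ 0 i ∈ JId r ∧ x * genE ∈ JId r ∧
        x * (genF * genPI 0 Finset.univ * genQI 0 Finset.univ) ∈ JId r) ∧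
    (∀ i : Fin r, ∃ φ : LambdaMod r →+ LambdaMod r, ∀ x : EAlg r,
      φ (Submodule.Quotient.mk x) = Submodule.Quotient.mk (x * genP 0 i)) ∧
    (∀ i : Fin r, ∃ φ : LambdaMod r →+ LambdaMod r, ∀ x : EAlg r,
      φ (Submodule.Quotient.mk x) = Submodule.Quotient.mk (x * genQ 0 i)) ∧
    (∃ φ : LambdaMod r →+ LambdaMod r, ∀ x : EAlg r,
      φ (Submodule.Quotient.mk x) = Submodule.Quotient.mk (x * genE)) ∧
    (∃ φ : LambdaMod r →+ LambdaMod r, ∀ x : EAlg r,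
      φ (Submodule.Quotient.mk x) =
        Submodule.Quotient.mk (x * (genF * genPI 0 Finset.univ * genQI 0 Finset.univ))) := by
  have hP (i : Fin r) : genP 0 i ∈ idealizer (JId r) := genP_mem_idealizer 0 i
  have hQ (i : Fin r) : genQ 0 i ∈ idealizer (JId r) := genQ_mem_idealizer le_rfl i
  have hE : genE ∈ idealizer (JId r) := genE_mem_idealizer
  have hFPQ : genF * genPI 0 Finset.univ * genQI 0 Finset.univ ∈ idealizer (JId r) :=
    mul_mem genF_mul_genPI_univ_mem_idealizer (genQI_mem_idealizer le_rfl Finset.univ)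
  have descends {y : EAlg r} (hy : y ∈ idealizer (JId r)) :
      ∃ φ : LambdaMod r →+ LambdaMod r, ∀ x : EAlg r,
        φ (Submodule.Quotient.mk x) = Submodule.Quotient.mk (x * y) :=
    ⟨(quotientMulRight hy).toAddMonoidHom, quotientMulRight_mk hy⟩
  exact ⟨fun x hx i => ⟨hP i x hx, hQ i x hx, hE x hx, hFPQ x hx⟩,
    fun i => descends (hP i), fun i => descends (hQ i), descends hE, descends hFPQ⟩
end

section
/- Let V be an abelian group with an 𝔈(r)-representation, and let W₁ ⊆ W₂ ⊆ V be subgroups stable under all the operators P_{a,i}, Q_{a,i}, E, F. Assume W₂ is right admissible, i.e., for every w ∈ W₂ there exists a₀ ∈ ℤ such that P_{a,i}(w) = 0 for all a ≥ a₀ and all i ∈ [r]. Then for every w ∈ W₂ such that P_{a,i}(w) ∈ W₁ for all a > 0 and i ∈ [r], there exists v ∈ W₁ such that P_{a,i}(w − v) = 0 for all a > 0 and i ∈ [r]. -/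
/-- The ordered product `Q_{a,I} = Q_{a,a_0} ∘ ⋯ ∘ Q_{a,a_k}` for `I = {a_0 < ⋯ < a_k}`. -/
def qaProd {r : ℕ} {V : Type*} [AddCommGroup V] (Q : ℤ → Fin r → AddMonoid.End V)
    (a : ℤ) (I : Finset (Fin r)) : AddMonoid.End V :=
  ((I.sort (· ≤ ·)).map (Q a)).prod

/-- The ordered product `P_{a,I} = P_{a,a_k} ∘ ⋯ ∘ P_{a,a_0}` for `I = {a_0 < ⋯ < a_k}`. -/
def paProd {r : ℕ} {V : Type*} [AddCommGroup V] (P : ℤ → Fin r → AddMonoid.End V)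
    (a : ℤ) (I : Finset (Fin r)) : AddMonoid.End V :=
  ((I.sort (· ≤ ·)).reverse.map (P a)).prod

/-- An `𝔈(r)`-representation on an abelian group `V`: operators `P_{a,i}`, `Q_{a,i}`
and a pair of mutually inverse shifts `E`, `F = E⁻¹`, subject to the defining relations
of the infinite-dimensional Clifford algebra `𝔈(r)`. -/
structure ERep (r : ℕ) (V : Type*) [AddCommGroup V] where
  P : ℤ → Fin r → AddMonoid.End V
  Q : ℤ → Fin r → AddMonoid.End V
  E : AddMonoid.End V
  F : AddMonoid.End V
  EF_eq : E * F = 1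
  FE_eq : F * E = 1
  P_sq : ∀ (a : ℤ) (i : Fin r), P a i * P a i = 0
  Q_sq : ∀ (a : ℤ) (i : Fin r), Q a i * Q a i = 0
  E_P : ∀ (a : ℤ) (i : Fin r), E * P a i = P (a - 1) i * E
  E_Q : ∀ (a : ℤ) (i : Fin r), E * Q a i = Q (a - 1) i * E
  P_P : ∀ (a b : ℤ) (i j : Fin r), P a i * P b j + P b j * P a i = 0
  Q_Q : ∀ (a b : ℤ) (i j : Fin r), Q a i * Q b j + Q b j * Q a i = 0
  P_Q : ∀ (a b : ℤ) (i j : Fin r),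
    P a i * Q b j + Q b j * P a i = if i = j ∧ a = b then 1 else 0

/-!
Statement 14: projectivity-type lifting property.  If `W₁ ⊆ W₂ ⊆ V` are subgroups stable
under all operators, `W₂` right admissible, then any `w ∈ W₂` all of whose `P_{a,i}`-images
(`a > 0`) lie in `W₁` differs by an element `v ∈ W₁` from an element killed by all
`P_{a,i}` with `a > 0`.
-/

/-!
The operator `P_t Q_t = 1 - Q_t P_t` maps into the kernel of `P_t`, and it commutes with every other
`P_s`, so it preserves the kernels of all the `P_s`. Replacing `w` by `P_t Q_t w` changes it by
`Q_t P_t w ∈ W₁`. Right admissibility leaves only finitely many pairs `t = (a, i)` with `a > 0` and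
`P_t w ≠ 0`; after one such replacement for each of them, every `P_t w` with `a > 0` vanishes.
-/

theorem commute_mul_of_anticommute_s14 {R : Type*} [Ring R] {x y z : R}
    (hxy : x * y + y * x = 0) (hxz : x * z + z * x = 0) : Commute x (y * z) :=
  calc x * (y * z) = x * y * z := (mul_assoc x y z).symm
    _ = -(y * x) * z := by rw [eq_neg_of_add_eq_zero_left hxy]
    _ = y * -(x * z) := by noncomm_ring
    _ = y * (z * x) := by rw [eq_neg_of_add_eq_zero_left hxz, neg_neg]
    _ = y * z * x := (mul_assoc y z x).symm

/-- Families of annihilation operators `p` and creation operators `q` in a ring, subject to the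
canonical anticommutation relations other than those among the `q`. The relation `p s * p s = 0` is
a separate field because the ring may have `2`-torsion. -/
structure IsAnnihilationFamily {ι R : Type*} [Ring R] (p q : ι → R) : Prop where
  sq_eq_zero : ∀ s, p s * p s = 0
  anticommute : ∀ s t, p s * p t + p t * p s = 0
  mul_add_mul_self : ∀ s, p s * q s + q s * p s = 1
  anticommute_of_ne : ∀ s t, s ≠ t → p s * q t + q t * p s = 0

namespace IsAnnihilationFamily

section Ring

variable {ι R : Type*} [Ring R] {p q : ι → R}

theorem mul_eq_one_sub (h : IsAnnihilationFamily p q) (t : ι) : p t * q t = 1 - q t * p t :=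
  eq_sub_of_add_eq (h.mul_add_mul_self t)

theorem mul_one_sub_self (h : IsAnnihilationFamily p q) (t : ι) :
    p t * (1 - q t * p t) = 0 := by
  rw [← h.mul_eq_one_sub, ← mul_assoc, h.sq_eq_zero, zero_mul]

theorem commute_one_sub (h : IsAnnihilationFamily p q) {s t : ι} (hst : s ≠ t) :
    Commute (p s) (1 - q t * p t) := by
  rw [← h.mul_eq_one_sub]
  exact commute_mul_of_anticommute_s14 (h.anticommute s t) (h.anticommute_of_ne s t hst)

end Ring

section AddMonoidEnd

variable {ι V : Type*} [AddCommGroup V] {p q : ι → AddMonoid.End V}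

theorem apply_self_sub_eq_zero (h : IsAnnihilationFamily p q) (t : ι) (w : V) :
    p t (w - q t (p t w)) = 0 :=
  DFunLike.congr_fun (h.mul_one_sub_self t) w

theorem apply_sub_eq_zero (h : IsAnnihilationFamily p q) {s : ι} (t : ι) {w : V}
    (hw : p s w = 0) : p s (w - q t (p t w)) = 0 := by
  rcases eq_or_ne s t with rfl | hst
  · exact h.apply_self_sub_eq_zero s w
  · calc p s (w - q t (p t w)) = p s w - q t (p t (p s w)) :=
          DFunLike.congr_fun (h.commute_one_sub hst).eq w
      _ = 0 := by simp only [hw, map_zero, sub_zero]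

theorem exists_mem_forall_apply_sub_eq_zero (h : IsAnnihilationFamily p q) {W : AddSubgroup V}
    (hpW : ∀ t, ∀ v ∈ W, p t v ∈ W) (hqW : ∀ t, ∀ v ∈ W, q t v ∈ W) {w : V}
    (hfin : {t | p t w ≠ 0}.Finite) (hw : ∀ t, p t w ∈ W) :
    ∃ v ∈ W, ∀ t, p t (w - v) = 0 := by
  classical
  obtain ⟨S, hS⟩ : ∃ S : Finset ι, ∀ t ∉ S, p t w = 0 :=
    ⟨hfin.toFinset, fun t ht ↦ by simpa using ht⟩
  clear hfin
  induction S using Finset.induction_on generalizing w with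
  | empty => exact ⟨0, W.zero_mem, fun t ↦ by simpa using hS t⟩
  | insert t S _ ih =>
    have hqp : q t (p t w) ∈ W := hqW t _ (hw t)
    have hsupp : ∀ s ∉ S, p s (w - q t (p t w)) = 0 := by
      intro s hs
      rcases eq_or_ne s t with rfl | hst
      · exact h.apply_self_sub_eq_zero s w
      · exact h.apply_sub_eq_zero t (hS s (by simp [hst, hs]))
    have hmem : ∀ s, p s (w - q t (p t w)) ∈ W := fun s ↦ by
      rw [map_sub]
      exact W.sub_mem (hw s) (hpW s _ hqp)
    obtain ⟨v, hv, hkill⟩ := ih hmem hsupp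
    exact ⟨q t (p t w) + v, W.add_mem hqp hv, fun s ↦ by simpa only [sub_sub] using hkill s⟩

end AddMonoidEnd

end IsAnnihilationFamily

theorem ERep.isAnnihilationFamily_of_injective {ι V : Type*} {r : ℕ} [AddCommGroup V]
    (ρ : ERep r V) {f : ι → ℤ × Fin r} (hf : f.Injective) :
    IsAnnihilationFamily (fun t ↦ ρ.P (f t).1 (f t).2) (fun t ↦ ρ.Q (f t).1 (f t).2) where
  sq_eq_zero t := ρ.P_sq _ _
  anticommute s t := ρ.P_P _ _ _ _
  mul_add_mul_self t := by
    simpa only [and_self, if_true] using ρ.P_Q (f t).1 (f t).1 (f t).2 (f t).2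
  anticommute_of_ne s t hst := by
    have hne : ¬((f s).2 = (f t).2 ∧ (f s).1 = (f t).1) :=
      fun heq ↦ hst (hf (Prod.ext heq.2 heq.1))
    rw [ρ.P_Q, if_neg hne]

theorem stmt_14_general {r : ℕ} {V : Type*} [AddCommGroup V] (ρ : ERep r V) {W : AddSubgroup V}
    (hPW : ∀ a : ℤ, 0 < a → ∀ i, ∀ v ∈ W, ρ.P a i v ∈ W)
    (hQW : ∀ a : ℤ, 0 < a → ∀ i, ∀ v ∈ W, ρ.Q a i v ∈ W) {w : V}
    (hadm : ∃ a₀ : ℤ, ∀ a : ℤ, a₀ ≤ a → ∀ i, ρ.P a i w = 0)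
    (hw : ∀ a : ℤ, 0 < a → ∀ i, ρ.P a i w ∈ W) :
    ∃ v ∈ W, ∀ a : ℤ, 0 < a → ∀ i, ρ.P a i (w - v) = 0 := by
  obtain ⟨a₀, ha₀⟩ := hadm
  have hfin : {t : {t : ℤ × Fin r // 0 < t.1} | ρ.P t.1.1 t.1.2 w ≠ 0}.Finite := by
    refine ((Finset.Ioo 0 a₀ ×ˢ Finset.univ).finite_toSet.preimage
      Subtype.val_injective.injOn).subset fun t ht ↦ ?_
    have hlt : t.1.1 < a₀ := lt_of_not_ge fun hge ↦ ht (ha₀ _ hge _)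
    simpa using ⟨t.2, hlt⟩
  obtain ⟨v, hv, hkill⟩ :=
    (ρ.isAnnihilationFamily_of_injective Subtype.val_injective).exists_mem_forall_apply_sub_eq_zero
      (fun t ↦ hPW _ t.2 _) (fun t ↦ hQW _ t.2 _) hfin (fun t ↦ hw _ t.2 _)
  exact ⟨v, hv, fun a ha i ↦ hkill ⟨(a, i), ha⟩⟩

theorem stmt_14 {r : ℕ} (hr : 0 < r) {V : Type} [AddCommGroup V] (ρ : ERep r V)
    (W₁ W₂ : AddSubgroup V) (h12 : W₁ ≤ W₂)
    (hstab1 : ∀ v ∈ W₁, (∀ (a : ℤ) (i : Fin r), ρ.P a i v ∈ W₁ ∧ ρ.Q a i v ∈ W₁) ∧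
      ρ.E v ∈ W₁ ∧ ρ.F v ∈ W₁)
    (hstab2 : ∀ v ∈ W₂, (∀ (a : ℤ) (i : Fin r), ρ.P a i v ∈ W₂ ∧ ρ.Q a i v ∈ W₂) ∧
      ρ.E v ∈ W₂ ∧ ρ.F v ∈ W₂)
    (hadm : ∀ w ∈ W₂, ∃ a₀ : ℤ, ∀ a : ℤ, a₀ ≤ a → ∀ i : Fin r, ρ.P a i w = 0) :
    ∀ w ∈ W₂, (∀ a : ℤ, 0 < a → ∀ i : Fin r, ρ.P a i w ∈ W₁) →
      ∃ v ∈ W₁, ∀ a : ℤ, 0 < a → ∀ i : Fin r, ρ.P a i (w - v) = 0 := fun w hw hP ↦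
  stmt_14_general ρ (fun a _ i v hv ↦ ((hstab1 v hv).1 a i).1)
    (fun a _ i v hv ↦ ((hstab1 v hv).1 a i).2) (hadm w hw) hP
end
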